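/- arXiv:1305.1664 — 3 statements merged into one kernel-verified Lean document; each statement's English description precedes it below -/
import Mathlib

section
/- Let G be a nontrivial finite group acting freely by diffeomorphisms on the sphere Sⁿ, let N = Sⁿ/G be the orbit space, and let m, n ≥ 2. If f₁, f₂ : Sᵐ → N are continuous maps that are NOT homotopic to each other, then MCC(f₁,f₂) = #G: there exist continuous f₁' homotopic to f₁ and f₂' homotopic to f₂ whose coincidence set has exactly #G path components, and no homotopic pair has a coincidence set with fewer path components. -/
open scoped Manifold

/-- The unit sphere `Sᵏ ⊆ ℝ^{k+1}`. -/
abbrev Sph (k : ℕ) : Type :=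
  Metric.sphere (0 : EuclideanSpace ℝ (Fin (k + 1))) 1

/-!
Lift `f₁` and `f₂` to maps `F₁, F₂ : Sᵐ → Sⁿ`. The coincidence set of `f₁` and `f₂` is the disjoint
union over `g : G` of the sets `{F₁ = g • F₂}`, and no path of coincidences leaves one of these.

*Lower bound.* If `{F₁ = g • F₂}` is empty, then `F₁` is homotopic to `-(g • F₂)`, which in turn is
homotopic to `k • g • F₂` for every `k ≠ 1`, since such a `k` has no fixed points. So `f₁` and `f₂`
are homotopic.

*Upper bound.* One makes every set `{F₁ = g • F₂}` path connected. After homotopies, `F₂` takes a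
single value `a` on a large disc and `F₁ = F₂` outside a smaller disc. This leaves a map from `ℝᵐ`
to `Sⁿ`, constant outside a ball, whose fibres over the orbit of `a` have to be made path connected.
Approximate it by a piecewise affine map in general position; then the preimage of the ray
through `g • a` consists of finitely many convex pieces. Join the pieces of each `g` by generic
segments, and on a neighbourhood of these segments push the values towards the ray of `g • a`.
The segments have to avoid the preimages of the planes spanned by two orbit points, which have
codimension at least two if `n ≥ 3`. If `n = 2`, the group has order two: by the hairy ball theorem
two fixed-point-free maps `S² → S²` agree somewhere. A homeomorphism then moves the orbit of `a` to
an antipodal pair, and the planes degenerate to lines.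
-/

namespace Coincidence

open Set Metric Module Topology

section GeneralPosition

variable {E F : Type*} [NormedAddCommGroup E] [NormedSpace ℝ E]
  [NormedAddCommGroup F] [NormedSpace ℝ F]

lemma mem_of_lineMap_mem {Z : AffineSubspace ℝ E} {o p : E} {t : ℝ} (hp : p ∈ Z)
    (ht : t ≠ 1) (h : AffineMap.lineMap o p t ∈ Z) : o ∈ Z := by
  have ht' : 1 - t ≠ 0 := sub_ne_zero.2 ht.symm
  convert AffineMap.lineMap_mem (1 - t)⁻¹ hp h using 1
  have hsub : AffineMap.lineMap o p t - p = (1 - t) • (o - p) := by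
    rw [AffineMap.lineMap_apply_module]
    module
  rw [AffineMap.lineMap_apply, vsub_eq_sub, hsub, inv_smul_smul₀ ht', vadd_eq_add, sub_add_cancel]

lemma affineSpan_insert_ne_top {Z : AffineSubspace ℝ E}
    (hZ : finrank ℝ Z.direction + 2 ≤ finrank ℝ E) (p : E) :
    affineSpan ℝ (insert p (Z : Set E)) ≠ ⊤ := by
  intro htop
  have hle := finrank_vectorSpan_insert_le Z p
  rw [← direction_affineSpan, htop, AffineSubspace.direction_top, finrank_top] at hle
  omega

lemma exists_affineSubspace_ne_top_of_not_surjective (A : E →ᵃ[ℝ] F) (S : Submodule ℝ F)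
    (hA : ¬ Function.Surjective (S.mkQ ∘ₗ A.linear)) :
    ∃ W : AffineSubspace ℝ F, W ≠ ⊤ ∧ ∀ v x, A x + v ∈ S → v ∈ W := by
  let B : E →ᵃ[ℝ] F ⧸ S := S.mkQ.toAffineMap.comp A
  have hB : ¬ Function.Surjective B := fun h ↦ hA ((AffineMap.linear_surjective_iff B).2 h)
  refine ⟨((⊤ : AffineSubspace ℝ E).map B).comap (-S.mkQ).toAffineMap, fun htop ↦ hB fun z ↦ ?_,
    fun v x hx ↦ ⟨x, trivial, ?_⟩⟩
  · obtain ⟨w, hw⟩ := S.mkQ_surjective (-z)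
    obtain ⟨x, -, hx⟩ : w ∈ ((⊤ : AffineSubspace ℝ E).map B).comap (-S.mkQ).toAffineMap :=
      htop ▸ AffineSubspace.mem_top ℝ F w
    exact ⟨x, by simpa [hw] using hx⟩
  · rw [← S.ker_mkQ, LinearMap.mem_ker, map_add] at hx
    exact eq_neg_of_add_eq_zero_left hx

variable [FiniteDimensional ℝ E] [FiniteDimensional ℝ F]

lemma exists_mem_open_forall_notMem_affineSubspace {β : Type*} [Finite β]
    {Z : β → AffineSubspace ℝ E} (hZ : ∀ b, Z b ≠ ⊤) {U : Set E} (hU : IsOpen U)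
    (hne : U.Nonempty) : ∃ o ∈ U, ∀ b, o ∉ Z b := by
  borelize E
  let μ : MeasureTheory.Measure E := MeasureTheory.Measure.addHaar
  have hnull : μ (⋃ b, (Z b : Set E)) = 0 :=
    MeasureTheory.measure_iUnion_null fun b ↦ μ.addHaar_affineSubspace _ (hZ b)
  by_contra! hcover
  have hsub : U ⊆ ⋃ b, (Z b : Set E) := fun o ho ↦ mem_iUnion.2 (hcover o ho)
  exact (hU.measure_pos μ hne).ne' (MeasureTheory.measure_mono_null hsub hnull)

lemma exists_mem_open_lines_avoid {β γ : Type*} [Finite β] [Finite γ]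
    {Z : β → AffineSubspace ℝ E} (hZ : ∀ b, finrank ℝ (Z b).direction + 2 ≤ finrank ℝ E)
    (p : γ → E) {U : Set E} (hU : IsOpen U) (hne : U.Nonempty) :
    ∃ o ∈ U, (∀ b, o ∉ Z b) ∧ ∀ b c (t : ℝ), AffineMap.lineMap o (p c) t ∈ Z b → t = 1 := by
  let W : β ⊕ β × γ → AffineSubspace ℝ E :=
    Sum.elim Z fun bc ↦ affineSpan ℝ (insert (p bc.2) (Z bc.1 : Set E))
  have hW : ∀ w, W w ≠ ⊤ := by
    rintro (b | ⟨b, c⟩)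
    · rintro (htop : Z b = ⊤)
      have := hZ b
      rw [htop, AffineSubspace.direction_top, finrank_top] at this
      omega
    · exact affineSpan_insert_ne_top (hZ b) (p c)
  obtain ⟨o, hoU, ho⟩ := exists_mem_open_forall_notMem_affineSubspace hW hU hne
  refine ⟨o, hoU, fun b ↦ ho (Sum.inl b), fun b c t hx ↦ ?_⟩
  by_contra ht
  exact ho (Sum.inr (b, c)) <| mem_of_lineMap_mem
    (subset_affineSpan ℝ _ (mem_insert _ _)) ht (subset_affineSpan ℝ _ (mem_insert_of_mem _ hx))

lemma finrank_direction_comap_add (A : E →ᵃ[ℝ] F) (S : Submodule ℝ F)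
    (hA : Function.Surjective (S.mkQ ∘ₗ A.linear)) :
    finrank ℝ (S.toAffineSubspace.comap A).direction + finrank ℝ F
      = finrank ℝ E + finrank ℝ S := by
  have hmem : ∀ x, A x ∈ S ↔ S.mkQ (A x) = 0 := fun x ↦ (Submodule.Quotient.mk_eq_zero S).symm
  obtain ⟨x₀, hx₀⟩ : ∃ x, A x ∈ S := by
    obtain ⟨x, hx⟩ := hA (-S.mkQ (A 0))
    refine ⟨x, (hmem x).2 ?_⟩
    rw [congrFun A.decomp x, Pi.add_apply, map_add]
    simpa [add_eq_zero_iff_eq_neg] using hx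
  have hdir : (S.toAffineSubspace.comap A).direction = LinearMap.ker (S.mkQ ∘ₗ A.linear) := by
    ext w
    have hx₀' : x₀ ∈ S.toAffineSubspace.comap A := hx₀
    rw [← AffineSubspace.vadd_mem_iff_mem_direction w hx₀', LinearMap.mem_ker,
      AffineSubspace.mem_comap, A.map_vadd, vadd_eq_add, Submodule.mem_toAffineSubspace,
      S.add_mem_iff_left hx₀]
    exact (Submodule.Quotient.mk_eq_zero S).symm
  have hrank := LinearMap.finrank_range_add_finrank_ker (S.mkQ ∘ₗ A.linear)
  rw [LinearMap.range_eq_top.2 hA, finrank_top] at hrank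
  have hquot := S.finrank_quotient_add_finrank
  rw [hdir]
  omega

lemma exists_translation_transverse {Λ σ : Type*} [Finite Λ] [Finite σ] (A : Λ → E →ᵃ[ℝ] F)
    (S : σ → Submodule ℝ F) {ε : ℝ} (hε : 0 < ε) :
    ∃ v : F, ‖v‖ < ε ∧ ∀ l s, (∀ x, A l x + v ∉ S s) ∨
      finrank ℝ ((S s).toAffineSubspace.comap (A l + AffineMap.const ℝ E v)).direction
        + finrank ℝ F = finrank ℝ E + finrank ℝ (S s) := by
  have hbad : ∀ ls : Λ × σ, ∃ W : AffineSubspace ℝ F, W ≠ ⊤ ∧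
      (¬ Function.Surjective ((S ls.2).mkQ ∘ₗ (A ls.1).linear) →
        ∀ v x, A ls.1 x + v ∈ S ls.2 → v ∈ W) := by
    rintro ⟨l, s⟩
    by_cases hA : Function.Surjective ((S s).mkQ ∘ₗ (A l).linear)
    · exact ⟨⊥, AffineSubspace.bot_ne_top ℝ F F, fun h ↦ absurd hA h⟩
    · obtain ⟨W, hW, hAW⟩ := exists_affineSubspace_ne_top_of_not_surjective (A l) (S s) hA
      exact ⟨W, hW, fun _ ↦ hAW⟩
  choose W hW hAW using hbad
  obtain ⟨v, hv, hvW⟩ := exists_mem_open_forall_notMem_affineSubspace hW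
    (isOpen_ball (x := (0 : F)) (ε := ε)) ⟨0, mem_ball_self hε⟩
  refine ⟨v, by simpa using hv, fun l s ↦ ?_⟩
  by_cases hA : Function.Surjective ((S s).mkQ ∘ₗ (A l).linear)
  · refine Or.inr (finrank_direction_comap_add _ (S s) ?_)
    simpa using hA
  · exact Or.inl fun x hx ↦ hvW (l, s) (hAW (l, s) hA v x hx)

end GeneralPosition

section PiecewiseAffine

variable {E F : Type*} [NormedAddCommGroup E] [NormedSpace ℝ E]
  [NormedAddCommGroup F] [NormedSpace ℝ F]

/-- Piecewise affine functions: finitely many convex pieces cover the space, and the function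
agrees with an affine map on each of them. The pieces may overlap, so no triangulation is needed. -/
def IsPiecewiseAffine (f : E → F) : Prop :=
  ∃ (Λ : Type) (_ : Finite Λ) (P : Λ → Set E) (A : Λ → E →ᵃ[ℝ] F),
    (∀ l, Convex ℝ (P l)) ∧ (∀ x, ∃ l, x ∈ P l) ∧ ∀ l, EqOn f (A l) (P l)

namespace IsPiecewiseAffine

lemma of_affineMap (A : E →ᵃ[ℝ] F) : IsPiecewiseAffine A :=
  ⟨Unit, inferInstance, fun _ ↦ univ, fun _ ↦ A, fun _ ↦ convex_univ, fun _ ↦ ⟨(), mem_univ _⟩,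
    fun _ _ _ ↦ rfl⟩

lemma add {f g : E → F} (hf : IsPiecewiseAffine f) (hg : IsPiecewiseAffine g) :
    IsPiecewiseAffine (f + g) := by
  obtain ⟨Λ, _, P, A, hP, hcover, hA⟩ := hf
  obtain ⟨Λ', _, P', A', hP', hcover', hA'⟩ := hg
  refine ⟨Λ × Λ', inferInstance, fun l ↦ P l.1 ∩ P' l.2, fun l ↦ A l.1 + A' l.2,
    fun l ↦ (hP _).inter (hP' _), fun x ↦ ?_, fun l x hx ↦ ?_⟩
  · obtain ⟨l, hl⟩ := hcover x
    obtain ⟨l', hl'⟩ := hcover' x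
    exact ⟨(l, l'), hl, hl'⟩
  · rw [Pi.add_apply, hA _ hx.1, hA' _ hx.2]
    rfl

lemma sum {ι : Type*} (s : Finset ι) {f : ι → E → F} (hf : ∀ i ∈ s, IsPiecewiseAffine (f i)) :
    IsPiecewiseAffine (∑ i ∈ s, f i) :=
  Finset.sum_induction f IsPiecewiseAffine (fun _ _ ↦ add) (of_affineMap (0 : E →ᵃ[ℝ] F)) hf

lemma smul_const {f : E → ℝ} (hf : IsPiecewiseAffine f) (v : F) :
    IsPiecewiseAffine fun x ↦ f x • v := by
  obtain ⟨Λ, _, P, A, hP, hcover, hA⟩ := hf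
  refine ⟨Λ, inferInstance, P, fun l ↦ (LinearMap.toSpanSingleton ℝ F v).toAffineMap.comp (A l),
    hP, hcover, fun l x hx ↦ ?_⟩
  simp [hA _ hx]

lemma neg {f : E → ℝ} (hf : IsPiecewiseAffine f) : IsPiecewiseAffine (-f) := by
  simpa [Pi.neg_def] using hf.smul_const (-1 : ℝ)

lemma sup {f g : E → ℝ} (hf : IsPiecewiseAffine f) (hg : IsPiecewiseAffine g) :
    IsPiecewiseAffine (f ⊔ g) := by
  obtain ⟨Λ, _, P, A, hP, hcover, hA⟩ := hf
  obtain ⟨Λ', _, P', A', hP', hcover', hA'⟩ := hg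
  have hconvex : ∀ B : E →ᵃ[ℝ] ℝ, Convex ℝ {x | B x ≤ 0} := fun B ↦
    (convex_Iic (0 : ℝ)).affine_preimage B
  refine ⟨(Λ × Λ') ⊕ (Λ × Λ'), inferInstance,
    Sum.elim (fun l ↦ P l.1 ∩ P' l.2 ∩ {x | (A l.1 - A' l.2) x ≤ 0})
      (fun l ↦ P l.1 ∩ P' l.2 ∩ {x | (A' l.2 - A l.1) x ≤ 0}),
    Sum.elim (fun l ↦ A' l.2) (fun l ↦ A l.1), ?_, fun x ↦ ?_, ?_⟩
  · rintro (l | l) <;> exact ((hP _).inter (hP' _)).inter (hconvex _)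
  · obtain ⟨l, hl⟩ := hcover x
    obtain ⟨l', hl'⟩ := hcover' x
    rcases le_total (A l x) (A' l' x) with hle | hle
    · exact ⟨Sum.inl (l, l'), ⟨hl, hl'⟩, sub_nonpos.2 hle⟩
    · exact ⟨Sum.inr (l, l'), ⟨hl, hl'⟩, sub_nonpos.2 hle⟩
  · rintro (l | l) x ⟨⟨hx, hx'⟩, hle⟩
    · rw [Pi.sup_apply, hA _ hx, hA' _ hx', sup_eq_right.2 (sub_nonpos.1 hle)]
      rfl
    · rw [Pi.sup_apply, hA _ hx, hA' _ hx', sup_eq_left.2 (sub_nonpos.1 hle)]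
      rfl

lemma inf {f g : E → ℝ} (hf : IsPiecewiseAffine f) (hg : IsPiecewiseAffine g) :
    IsPiecewiseAffine (f ⊓ g) := by
  have hinf : f ⊓ g = -(-f ⊔ -g) := by rw [neg_sup, neg_neg, neg_neg]
  exact hinf ▸ (hf.neg.sup hg.neg).neg

end IsPiecewiseAffine

lemma exists_piecewiseAffine_near_real {D : Set E} (hD : IsCompact D) {φ : E → ℝ}
    (hφ : Continuous φ) {ε : ℝ} (hε : 0 < ε) :
    ∃ g : E → ℝ, Continuous g ∧ IsPiecewiseAffine g ∧ ∀ x ∈ D, |g x - φ x| < ε := by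
  have : CompactSpace D := isCompact_iff_compactSpace.1 hD
  let L : Set C(D, ℝ) := {f | ∃ g : E → ℝ, Continuous g ∧ IsPiecewiseAffine g ∧ ∀ x : D, f x = g x}
  have haffine : ∀ (u : E →L[ℝ] ℝ) (c : ℝ), ∃ f ∈ L, ∀ x : D, f x = u x + c := fun u c ↦
    ⟨⟨fun x ↦ u x + c, by fun_prop⟩,
      ⟨fun x ↦ u x + c, by fun_prop,
        IsPiecewiseAffine.of_affineMap (u.toLinearMap.toAffineMap + AffineMap.const ℝ E c),
        fun _ ↦ rfl⟩, fun _ ↦ rfl⟩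
  have hL : closure L = ⊤ := by
    apply ContinuousMap.sublattice_closure_eq_top
    · obtain ⟨f, hf, -⟩ := haffine 0 0
      exact ⟨f, hf⟩
    · rintro f ⟨g, hg, hPg, hfg⟩ f' ⟨g', hg', hPg', hfg'⟩
      exact ⟨g ⊓ g', hg.inf hg', hPg.inf hPg', fun x ↦ by simp [hfg, hfg']⟩
    · rintro f ⟨g, hg, hPg, hfg⟩ f' ⟨g', hg', hPg', hfg'⟩
      exact ⟨g ⊔ g', hg.sup hg', hPg.sup hPg', fun x ↦ by simp [hfg, hfg']⟩
    · intro v x y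
      by_cases hxy : x = y
      · obtain ⟨f, hf, hfv⟩ := haffine 0 (v y)
        exact ⟨f, hf, by simp [hfv, hxy], by simp [hfv]⟩
      · obtain ⟨u, hu⟩ := SeparatingDual.exists_eq_one (R := ℝ)
          (sub_ne_zero.2 fun h ↦ hxy (Subtype.ext h) : (x : E) - y ≠ 0)
        obtain ⟨f, hf, hfv⟩ := haffine ((v x - v y) • u) (v y - (v x - v y) * u y)
        refine ⟨f, hf, ?_, by simp [hfv]⟩
        rw [map_sub, sub_eq_iff_eq_add] at hu
        simp only [hfv, smul_apply, smul_eq_mul, hu]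
        ring
  have hmem : (⟨fun z : D ↦ φ z, by fun_prop⟩ : C(D, ℝ)) ∈ closure L := hL ▸ trivial
  obtain ⟨f, ⟨g, hg, hPg, hfg⟩, hdist⟩ := Metric.mem_closure_iff.1 hmem ε hε
  refine ⟨g, hg, hPg, fun x hx ↦ ?_⟩
  have hlt := (ContinuousMap.dist_lt_iff hε).1 hdist ⟨x, hx⟩
  rwa [hfg, dist_comm, Real.dist_eq] at hlt

variable [FiniteDimensional ℝ F]

lemma exists_piecewiseAffine_near {D : Set E} (hD : IsCompact D) {φ : E → F}
    (hφ : Continuous φ) {ε : ℝ} (hε : 0 < ε) :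
    ∃ g : E → F, Continuous g ∧ IsPiecewiseAffine g ∧ ∀ x ∈ D, ‖g x - φ x‖ < ε := by
  let b := finBasis ℝ F
  have hcoord : ∀ i, Continuous fun x ↦ b.repr (φ x) i := fun i ↦
    (LinearMap.continuous_of_finiteDimensional (b.coord i)).comp hφ
  have hsum : 0 < 1 + ∑ i, ‖b i‖ := by positivity
  choose g hg hPg hgD using fun i ↦
    exists_piecewiseAffine_near_real hD (hcoord i) (div_pos hε hsum)
  refine ⟨fun x ↦ ∑ i, g i x • b i, by fun_prop, ?_, fun x hx ↦ ?_⟩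
  · convert IsPiecewiseAffine.sum Finset.univ fun i _ ↦ (hPg i).smul_const (b i) using 1
    ext x
    simp
  · calc ‖∑ i, g i x • b i - φ x‖ = ‖∑ i, (g i x - b.repr (φ x) i) • b i‖ := by
          conv_lhs => rw [← b.sum_repr (φ x)]
          simp only [sub_smul, Finset.sum_sub_distrib]
      _ ≤ ∑ i, ε / (1 + ∑ i, ‖b i‖) * ‖b i‖ := norm_sum_le_of_le _ fun i _ ↦ by
          rw [norm_smul]
          gcongr
          exact (hgD i x hx).le
      _ = ε * ((∑ i, ‖b i‖) / (1 + ∑ i, ‖b i‖)) := by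
          rw [← Finset.mul_sum]
          ring
      _ < ε := by
          rw [mul_lt_iff_lt_one_right hε, div_lt_one hsum]
          linarith

lemma exists_piecewiseAffine_near_transverse [FiniteDimensional ℝ E] {σ : Type*} [Finite σ]
    (S : σ → Submodule ℝ F) {D : Set E} (hD : IsCompact D) {φ : E → F} (hφ : Continuous φ)
    {ε : ℝ} (hε : 0 < ε) :
    ∃ f : E → F, Continuous f ∧ (∀ x ∈ D, ‖f x - φ x‖ < ε) ∧
      ∃ (Λ : Type) (_ : Finite Λ) (P : Λ → Set E) (A : Λ → E →ᵃ[ℝ] F),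
        (∀ l, Convex ℝ (P l)) ∧ (∀ x, ∃ l, x ∈ P l) ∧ (∀ l, EqOn f (A l) (P l)) ∧
        ∀ l s, (∀ x, A l x ∉ S s) ∨
          finrank ℝ ((S s).toAffineSubspace.comap (A l)).direction + finrank ℝ F
            = finrank ℝ E + finrank ℝ (S s) := by
  obtain ⟨g, hg, ⟨Λ, hΛ, P, A, hP, hcover, hA⟩, hgD⟩ :=
    exists_piecewiseAffine_near hD hφ (half_pos hε)
  obtain ⟨v, hv, htrans⟩ := exists_translation_transverse A S (half_pos hε)
  refine ⟨fun x ↦ g x + v, by fun_prop, fun x hx ↦ ?_, Λ, hΛ, P,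
    fun l ↦ A l + AffineMap.const ℝ E v, hP, hcover, fun l x hx ↦ ?_, htrans⟩
  · calc ‖g x + v - φ x‖ = ‖g x - φ x + v‖ := by rw [sub_add_eq_add_sub]
      _ ≤ ‖g x - φ x‖ + ‖v‖ := norm_add_le _ _
      _ < ε := by linarith [hgD x hx]
  · simp [hA l hx]

end PiecewiseAffine

section Push

variable {F : Type*} [NormedAddCommGroup F] [NormedSpace ℝ F]

/-- The open half-line from the origin through `y`. -/
def openRay (y : F) : Set F := {w | ∃ s : ℝ, 0 < s ∧ w = s • y}

/-- The vectors that a straight push towards `v` can move to `0` or to the ray through `u`. -/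
def cone (u v : F) : Set F := {w | ∃ α β : ℝ, 0 ≤ α ∧ 0 ≤ β ∧ w = α • u - β • v}

lemma eq_of_smul_eq_smul {u v : F} (hu : ‖u‖ = 1) (hv : ‖v‖ = 1) {s t : ℝ} (hs : 0 < s)
    (ht : 0 ≤ t) (h : s • u = t • v) : u = v := by
  have hst : s = t := by
    simpa [norm_smul, hu, hv, abs_of_pos hs, abs_of_nonneg ht] using congrArg norm h
  subst hst
  exact smul_right_injective F hs.ne' h

lemma isClosed_cone {u v : F} (hu : ‖u‖ = 1) (hv : ‖v‖ = 1) (huv : u ≠ v) :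
    IsClosed (cone u v) := by
  let c : unitInterval → F := fun τ ↦ (1 - (τ : ℝ)) • u - (τ : ℝ) • v
  have hc : ∀ τ, c τ ≠ 0 := by
    intro τ h
    have h' : (1 - (τ : ℝ)) • u = (τ : ℝ) • v := sub_eq_zero.1 h
    rcases τ.2.2.lt_or_eq with hτ | hτ
    · exact huv (eq_of_smul_eq_smul hu hv (sub_pos.2 hτ) τ.2.1 h')
    · rw [hτ, sub_self, zero_smul, one_smul] at h'
      simp [← h'] at hv
  -- up to scaling, the cone is the compact arc `c`
  have hcone : cone u v
      = Prod.fst '' {z : F × unitInterval | ‖c z.2‖ • z.1 = ‖z.1‖ • c z.2} := by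
    ext w
    simp only [mem_image, mem_ofPred_eq, Prod.exists, exists_and_right, exists_eq_right]
    constructor
    · rintro ⟨α, β, hα, hβ, rfl⟩
      rcases (add_nonneg hα hβ).eq_or_lt with h0 | hpos
      · exact ⟨0, by simp [show α = 0 by linarith, show β = 0 by linarith]⟩
      · refine ⟨⟨β / (α + β), by positivity, by rw [div_le_one hpos]; linarith⟩, ?_⟩
        have hscale : α • u - β • v = (α + β) • ((1 - β / (α + β)) • u - (β / (α + β)) • v) := by
          rw [smul_sub, smul_smul, smul_smul, mul_sub, mul_div_cancel₀ _ hpos.ne', mul_one,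
            add_sub_cancel_right]
        rw [hscale, norm_smul, Real.norm_of_nonneg hpos.le, smul_smul, mul_comm]
    · rintro ⟨τ, h⟩
      have hτ := τ.2.1
      have hτ' := sub_nonneg.2 τ.2.2
      refine ⟨‖c τ‖⁻¹ * (‖w‖ * (1 - τ)), ‖c τ‖⁻¹ * (‖w‖ * τ), by positivity, by positivity, ?_⟩
      calc w = ‖c τ‖⁻¹ • ‖w‖ • ((1 - (τ : ℝ)) • u - (τ : ℝ) • v) := by
            rw [← h, inv_smul_smul₀ (norm_ne_zero_iff.2 (hc τ))]
        _ = _ := by module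
  rw [hcone]
  exact isClosedMap_fst_of_compactSpace _ (isClosed_eq (by fun_prop) (by fun_prop))

lemma mem_cone_of_lineMap_eq {u v w : F} {r s : ℝ} (hr : r ∈ Ico (0 : ℝ) 1) (hs : 0 ≤ s)
    (h : AffineMap.lineMap w v r = s • u) : w ∈ cone u v := by
  have hr' : 0 < 1 - r := sub_pos.2 hr.2
  refine ⟨(1 - r)⁻¹ * s, (1 - r)⁻¹ * r, by positivity, mul_nonneg (by positivity) hr.1, ?_⟩
  rw [AffineMap.lineMap_apply_module, ← eq_sub_iff_add_eq] at h
  rw [mul_smul, mul_smul, ← smul_sub, ← h, inv_smul_smul₀ hr'.ne']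

variable {ι : Type*} {y : ι → F} (hy : ∀ i, ‖y i‖ = 1) (hinj : Function.Injective y)
include hy

lemma lineMap_ne_zero_of_notMem_cone [Nontrivial ι] {i : ι} {w : F}
    (hw : ∀ j ≠ i, w ∉ cone (y j) (y i)) {r : ℝ} (hr : r ∈ Icc (0 : ℝ) 1) :
    AffineMap.lineMap w (y i) r ≠ 0 := by
  intro h
  obtain ⟨j, hj⟩ := exists_ne i
  rcases hr.2.eq_or_lt with rfl | hr1
  · rw [AffineMap.lineMap_apply_one] at h
    simpa [h] using hy i
  · exact hw j hj (mem_cone_of_lineMap_eq ⟨hr.1, hr1⟩ le_rfl (by rw [h, zero_smul]))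

include hinj

lemma openRay_eq_of_mem {i j : ι} {w : F} (hi : w ∈ openRay (y i)) (hj : w ∈ openRay (y j)) :
    i = j := by
  obtain ⟨s, hs, rfl⟩ := hi
  obtain ⟨t, ht, h⟩ := hj
  exact hinj (eq_of_smul_eq_smul (hy i) (hy j) hs ht.le h)

lemma mem_openRay_of_lineMap_mem_openRay [Nontrivial ι] {i k : ι} {w : F}
    (hw : ∀ j ≠ i, w ∉ cone (y j) (y i)) {r : ℝ} (hr : r ∈ Icc (0 : ℝ) 1)
    (h : AffineMap.lineMap w (y i) r ∈ openRay (y k)) :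
    k = i ∧ (r = 1 ∨ w ∈ openRay (y i)) := by
  obtain ⟨s, hs, h⟩ := h
  rcases hr.2.eq_or_lt with rfl | hr1
  · rw [AffineMap.lineMap_apply_one] at h
    exact ⟨(hinj (eq_of_smul_eq_smul (hy i) (hy k) one_pos hs.le (by rwa [one_smul]))).symm,
      Or.inl rfl⟩
  obtain rfl : k = i := by
    by_contra hki
    exact hw k hki (mem_cone_of_lineMap_eq ⟨hr.1, hr1⟩ hs.le h)
  have hw' : w = ((1 - r)⁻¹ * (s - r)) • y k := by
    rw [AffineMap.lineMap_apply_module, ← eq_sub_iff_add_eq, ← sub_smul] at h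
    rw [mul_smul, ← h, inv_smul_smul₀ (sub_pos.2 hr1).ne']
  have hinv : 0 < (1 - r)⁻¹ := inv_pos.2 (sub_pos.2 hr1)
  refine ⟨rfl, Or.inr ⟨_, mul_pos hinv ?_, hw'⟩⟩
  by_contra! hsr
  obtain ⟨j, hj⟩ := exists_ne k
  refine hw j hj ⟨0, (1 - r)⁻¹ * (r - s), le_rfl, mul_nonneg hinv.le (by linarith), ?_⟩
  rw [hw']
  module

end Push

section Weights

variable {X : Type*} [TopologicalSpace X] [PerfectlyNormalSpace X]

lemma exists_continuous_eq_one_iff {K D : Set X} (hK : IsClosed K) (hD : IsClosed D)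
    (hKD : Disjoint K D) : ∃ u : C(X, ℝ), (∀ x, u x ∈ Icc (0 : ℝ) 1) ∧ (∀ x ∈ D, u x = 0) ∧
      ∀ x, u x = 1 ↔ x ∈ K := by
  have hzero := perfectlyNormalSpace_iff_forall_isClosed_preimage_zero.1 ‹PerfectlyNormalSpace X›
  obtain ⟨f, hf, hf01⟩ := hzero K hK
  obtain ⟨g, hg, hg01⟩ := hzero D hD
  replace hf : ∀ x, x ∈ K ↔ f x = 0 := fun x ↦ by simp [hf]
  replace hg : ∀ x, x ∈ D ↔ g x = 0 := fun x ↦ by simp [hg]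
  have hpos : ∀ x, 0 < f x + g x := fun x ↦ by
    refine (add_nonneg (hf01 x).1 (hg01 x).1).lt_of_ne' fun h0 ↦ ?_
    rw [add_eq_zero_iff_of_nonneg (hf01 x).1 (hg01 x).1, ← hf, ← hg] at h0
    exact disjoint_left.1 hKD h0.1 h0.2
  refine ⟨⟨fun x ↦ g x / (f x + g x), by fun_prop (disch := exact fun x ↦ (hpos x).ne')⟩,
    fun x ↦ ⟨div_nonneg (hg01 x).1 (hpos x).le, ?_⟩, fun x hx ↦ ?_, fun x ↦ ?_⟩
  · exact (div_le_one (hpos x)).2 (by linarith [(hf01 x).1])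
  · simp [(hg x).1 hx]
  · rw [ContinuousMap.coe_mk, div_eq_one_iff_eq (hpos x).ne', hf, right_eq_add]

lemma exists_disjoint_weights {ι : Type*} [Finite ι] {K C : ι → Set X} (hK : ∀ i, IsClosed (K i))
    (hdisj : Pairwise (Function.onFun Disjoint K)) (hC : ∀ i, IsClosed (C i))
    (hKC : ∀ i, Disjoint (K i) (C i)) :
    ∃ ρ : ι → C(X, ℝ), (∀ i x, ρ i x ∈ Icc (0 : ℝ) 1) ∧ (∀ i x, ρ i x = 1 ↔ x ∈ K i) ∧
      (∀ i, ∀ x ∈ C i, ρ i x = 0) ∧ ∀ x i j, ρ i x ≠ 0 → ρ j x ≠ 0 → i = j := by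
  classical
  have := Fintype.ofFinite ι
  have hD : ∀ i, IsClosed (C i ∪ ⋃ j ∈ {j | j ≠ i}, K j) := fun i ↦
    (hC i).union ((Set.toFinite _).isClosed_biUnion fun j _ ↦ hK j)
  have hKD : ∀ i, Disjoint (K i) (C i ∪ ⋃ j ∈ {j | j ≠ i}, K j) := fun i ↦
    disjoint_union_right.2 ⟨hKC i, disjoint_iUnion₂_right.2 fun j hj ↦ hdisj (Ne.symm hj)⟩
  choose u hu01 hu0 hu1 using fun i ↦ exists_continuous_eq_one_iff (hK i) (hD i) (hKD i)
  have hsum : ∀ i x, 0 ≤ ∑ j ∈ Finset.univ.erase i, u j x := fun i x ↦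
    Finset.sum_nonneg fun j _ ↦ (hu01 j x).1
  have hne : ∀ i j x, i ≠ j → max 0 (u i x - ∑ j ∈ Finset.univ.erase i, u j x) ≠ 0 →
      u j x < u i x := fun i j x hij h ↦ by
    contrapose! h
    have hle : u j x ≤ ∑ j ∈ Finset.univ.erase i, u j x :=
      Finset.single_le_sum (f := fun j ↦ u j x) (fun j _ ↦ (hu01 j x).1)
        (Finset.mem_erase.2 ⟨hij.symm, Finset.mem_univ _⟩)
    exact max_eq_left (by linarith)
  refine ⟨fun i ↦ ⟨fun x ↦ max 0 (u i x - ∑ j ∈ Finset.univ.erase i, u j x), by fun_prop⟩,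
    fun i x ↦ ⟨le_max_left _ _, max_le zero_le_one ?_⟩, fun i x ↦ ⟨fun h ↦ ?_, fun hx ↦ ?_⟩,
    fun i x hx ↦ max_eq_left ?_, fun x i j hi hj ↦ ?_⟩
  · linarith [hsum i x, (hu01 i x).2]
  · rw [← hu1]
    have hle : 1 ≤ u i x - ∑ j ∈ Finset.univ.erase i, u j x :=
      (le_max_iff.1 h.ge).resolve_left (by norm_num)
    linarith [hsum i x, (hu01 i x).2]
  · have hzero : ∑ j ∈ Finset.univ.erase i, u j x = 0 := Finset.sum_eq_zero fun j hj ↦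
      hu0 j x <| Or.inr <| mem_biUnion (Finset.ne_of_mem_erase hj).symm hx
    rw [ContinuousMap.coe_mk, hzero, (hu1 i x).2 hx, sub_zero, max_eq_right zero_le_one]
  · linarith [hsum i x, hu0 i x (Or.inl hx)]
  · by_contra hij
    exact lt_asymm (hne i j x hij hi) (hne j i x (Ne.symm hij) hj)

variable {F : Type*} [NormedAddCommGroup F] [NormedSpace ℝ F] {ι : Type*} [Finite ι]

lemma exists_push [Nontrivial ι] {y : ι → F} (hy : ∀ i, ‖y i‖ = 1) (hinj : Function.Injective y)
    {ψ : X → F} (hψ : Continuous ψ) (hψ0 : ∀ x, ψ x ≠ 0) {K : ι → Set X}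
    (hK : ∀ i, IsClosed (K i)) (hdisj : Pairwise (Function.onFun Disjoint K))
    (hray : ∀ x i, ψ x ∈ openRay (y i) → x ∈ K i)
    (hcone : ∀ i j, j ≠ i → ∀ x ∈ K i, ψ x ∉ cone (y j) (y i)) :
    ∃ θ : X → F, Continuous θ ∧ (∀ x, ∀ t ∈ Icc (0 : ℝ) 1, ψ x + t • θ x ≠ 0) ∧
      (∀ x i, ψ x + θ x ∈ openRay (y i) ↔ x ∈ K i) ∧ ∀ i, ∀ x ∈ K i, ψ x + θ x = y i := by
  have := Fintype.ofFinite ι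
  obtain ⟨ρ, hρ01, hρ1, hρ0, hρ⟩ := exists_disjoint_weights hK hdisj
    (C := fun i ↦ ⋃ j ∈ {j | j ≠ i}, ψ ⁻¹' cone (y j) (y i))
    (fun i ↦ (Set.toFinite _).isClosed_biUnion fun j hj ↦
      (isClosed_cone (hy j) (hy i) (hinj.ne hj)).preimage hψ)
    (fun i ↦ disjoint_iUnion₂_right.2 fun j hj ↦ disjoint_left.2 (hcone i j hj))
  let θ : X → F := fun x ↦ ∑ i, ρ i x • (y i - ψ x)
  have hθ : ∀ x i, ρ i x ≠ 0 → ∀ t : ℝ,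
      ψ x + t • θ x = AffineMap.lineMap (ψ x) (y i) (t * ρ i x) := fun x i hi t ↦ by
    have hsingle : θ x = ρ i x • (y i - ψ x) := Finset.sum_eq_single i
      (fun j _ hj ↦ by rw [not_ne_iff.1 fun h ↦ hj (hρ x j i h hi), zero_smul]) (by simp)
    rw [hsingle, AffineMap.lineMap_apply_module]
    module
  have hθ0 : ∀ x, (∀ i, ρ i x = 0) → θ x = 0 := fun x h ↦ by simp [θ, h]
  have hoff : ∀ x i, ρ i x ≠ 0 → ∀ j ≠ i, ψ x ∉ cone (y j) (y i) := fun x i hi j hj hmem ↦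
    hi (hρ0 i x (mem_biUnion hj hmem))
  have hpush : ∀ i, ∀ x ∈ K i, ψ x + θ x = y i := fun i x hx ↦ by
    have h1 : ρ i x = 1 := (hρ1 i x).2 hx
    simpa [h1] using hθ x i (by simp [h1]) 1
  refine ⟨θ, by fun_prop, fun x t ht ↦ ?_, fun x k ↦ ⟨fun h ↦ ?_, fun hx ↦ ?_⟩, hpush⟩
  · by_cases hall : ∀ i, ρ i x = 0
    · simpa [hθ0 x hall] using hψ0 x
    obtain ⟨i, hi⟩ := not_forall.1 hall
    rw [hθ x i hi]
    exact lineMap_ne_zero_of_notMem_cone hy (hoff x i hi)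
      ⟨mul_nonneg ht.1 (hρ01 i x).1, mul_le_one₀ ht.2 (hρ01 i x).1 (hρ01 i x).2⟩
  · by_cases hall : ∀ i, ρ i x = 0
    · exact hray x k (by rwa [hθ0 x hall, add_zero] at h)
    obtain ⟨i, hi⟩ := not_forall.1 hall
    rw [← one_smul ℝ (θ x), hθ x i hi, one_mul] at h
    obtain ⟨rfl, h1 | hmem⟩ :=
      mem_openRay_of_lineMap_mem_openRay hy hinj (hoff x i hi) (hρ01 i x) h
    · exact (hρ1 k x).1 h1
    · exact hray x k hmem
  · exact ⟨1, one_pos, by rw [hpush k x hx, one_smul]⟩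

end Weights

/-- Any two points of `s` can be joined inside `s`: the set is empty or path connected. -/
def IsPrepathConnected {X : Type*} [TopologicalSpace X] (s : Set X) : Prop :=
  ∀ x ∈ s, ∀ y ∈ s, JoinedIn s x y

lemma IsPrepathConnected.of_hub {X : Type*} [TopologicalSpace X] {s t : Set X}
    (ht : ∀ x ∈ t, ∀ y ∈ t, JoinedIn s x y) (hst : ∀ x ∈ s, ∃ y ∈ t, JoinedIn s x y) :
    IsPrepathConnected s := fun x hx y hy ↦ by
  obtain ⟨x', hx', hxx'⟩ := hst x hx
  obtain ⟨y', hy', hyy'⟩ := hst y hy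
  exact (hxx'.trans (ht x' hx' y' hy')).trans hyy'.symm

section Joining

variable {E : Type*} [NormedAddCommGroup E] [NormedSpace ℝ E]

lemma isPrepathConnected_norm_ge (hE : 1 < Module.rank ℝ E) {R : ℝ} (hR : 0 < R) :
    IsPrepathConnected {x : E | R ≤ ‖x‖} := by
  refine .of_hub (t := sphere 0 R) (fun x hx y hy ↦
    ((isPathConnected_sphere hE 0 hR.le).joinedIn x hx y hy).mono fun z hz ↦
      (mem_sphere_zero_iff_norm.1 hz).ge) fun x (hx : R ≤ ‖x‖) ↦ ?_
  have hx0 : 0 < ‖x‖ := hR.trans_le hx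
  refine ⟨(R / ‖x‖) • x, ?_, JoinedIn.of_segment_subset ?_⟩
  · rw [mem_sphere_zero_iff_norm, norm_smul, Real.norm_of_nonneg (by positivity),
      div_mul_cancel₀ _ hx0.ne']
  · rintro w ⟨a, b, ha, hb, hab, rfl⟩
    calc R = a * R + b * R := by rw [← add_mul, hab, one_mul]
      _ ≤ a * ‖x‖ + b * R := by gcongr
      _ = ‖a • x + b • (R / ‖x‖) • x‖ := by
        rw [smul_smul, ← add_smul, norm_smul, Real.norm_of_nonneg (by positivity), add_mul,
          mul_assoc b, div_mul_cancel₀ _ hx0.ne']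

variable {ι γ β : Type*}

/-- The points of colour `i`: the union of the pieces `C l` of colour `κ l = i`, where the outer
region `R ≤ ‖x‖` counts as one more piece of the colour `i₀`. -/
def colorSet (κ : γ → ι) (C : γ → Set E) (i₀ : ι) (R : ℝ) (i : ι) : Set E :=
  {x | (∃ l, κ l = i ∧ x ∈ C l) ∨ i = i₀ ∧ R ≤ ‖x‖}

/-- The colour set `i` together with the segments from `r l` to `p l` for the pieces of colour
`i`. -/
def joinedSet (κ : γ → ι) (C : γ → Set E) (i₀ : ι) (R : ℝ) (p r : γ → E) (i : ι) : Set E :=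
  colorSet κ C i₀ R i ∪ ⋃ l ∈ {l | κ l = i}, segment ℝ (r l) (p l)

/-- Starting points `r l` for segments ending in `p l` that join the pieces of each colour: the
segments of colour `i₀` start in the outer region, those of another colour all start in the same
point of the ball. They avoid the exceptional subspaces `Z b`, and inside the ball those of
different colours can only meet on a `Z b`. -/
structure IsJoiningSystem (Z : β → AffineSubspace ℝ E) (κ : γ → ι) (i₀ : ι) (R : ℝ)
    (p r : γ → E) : Prop where
  outer : ∀ l, κ l = i₀ → R ≤ ‖r l‖
  center : ∀ i ≠ i₀, ∃ o ∈ ball (0 : E) R, ∀ l, κ l = i → r l = o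
  eq_of_mem : ∀ l b, ∀ q ∈ segment ℝ (r l) (p l), q ∈ Z b → q = p l
  mem_of_mem_of_mem : ∀ l l', κ l ≠ κ l' → ∀ q ∈ segment ℝ (r l) (p l),
    q ∈ segment ℝ (r l') (p l') → q ∈ ball (0 : E) R → ∃ b, q ∈ Z b

variable {Z : β → AffineSubspace ℝ E} {κ : γ → ι} {C : γ → Set E} {i₀ : ι} {R : ℝ} {p r : γ → E}

lemma isClosed_joinedSet [Finite γ] {i : ι} (hclosed : IsClosed (colorSet κ C i₀ R i)) :
    IsClosed (joinedSet κ C i₀ R p r i) :=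
  hclosed.union <| (Set.toFinite _).isClosed_biUnion fun l _ ↦ by
    rw [segment_eq_image_lineMap]
    exact (isCompact_Icc.image (by fun_prop)).isClosed

lemma isPrepathConnected_joinedSet (hE : 1 < Module.rank ℝ E) (hR : 0 < R)
    (hC : ∀ l, Convex ℝ (C l)) (hp : ∀ l, p l ∈ C l) (hr : IsJoiningSystem Z κ i₀ R p r) (i : ι) :
    IsPrepathConnected (joinedSet κ C i₀ R p r i) := by
  set K := joinedSet κ C i₀ R p r i
  have hCK : ∀ l, κ l = i → C l ⊆ K := fun l hl x hx ↦ Or.inl (Or.inl ⟨l, hl, hx⟩)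
  have hsegment : ∀ l, κ l = i → segment ℝ (r l) (p l) ⊆ K := fun l hl x hx ↦
    Or.inr (mem_biUnion (s := {l | κ l = i}) hl hx)
  have hjoin : ∀ x ∈ K, (∃ l, κ l = i ∧ JoinedIn K x (r l)) ∨ i = i₀ ∧ R ≤ ‖x‖ := by
    have hpr : ∀ l, κ l = i → ∀ x ∈ segment ℝ (r l) (p l), JoinedIn K x (r l) :=
      fun l hl x hx ↦ JoinedIn.of_segment_subset <| subset_trans
        ((convex_segment _ _).segment_subset hx (left_mem_segment _ _ _)) (hsegment l hl)
    rintro x ((⟨l, hl, hx⟩ | hx) | hx)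
    · exact Or.inl ⟨l, hl, (JoinedIn.of_segment_subset
        (((hC l).segment_subset hx (hp l)).trans (hCK l hl))).trans
          (hpr l hl _ (right_mem_segment _ _ _))⟩
    · exact Or.inr hx
    · simp only [mem_iUnion] at hx
      obtain ⟨l, hl, hx⟩ := hx
      exact Or.inl ⟨l, hl, hpr l hl x hx⟩
  by_cases hi : i = i₀
  · refine .of_hub (t := {x | R ≤ ‖x‖}) (fun x hx y hy ↦
      (isPrepathConnected_norm_ge hE hR x hx y hy).mono fun z hz ↦ Or.inl (Or.inr ⟨hi, hz⟩))
        fun x hx ↦ ?_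
    rcases hjoin x hx with ⟨l, hl, hxl⟩ | ⟨-, hxR⟩
    · exact ⟨r l, hr.outer l (hl.trans hi), hxl⟩
    · exact ⟨x, hxR, JoinedIn.refl hx⟩
  · obtain ⟨o, -, ho⟩ := hr.center i hi
    have hjoino : ∀ x ∈ K, JoinedIn K x o := fun x hx ↦ by
      obtain ⟨l, hl, hxl⟩ := (hjoin x hx).resolve_right fun h ↦ hi h.1
      exact ho l hl ▸ hxl
    exact fun x hx y hy ↦ (hjoino x hx).trans (hjoino y hy).symm

section Separation

variable (hdisj : Pairwise (Function.onFun Disjoint (colorSet κ C i₀ R))) (hp : ∀ l, p l ∈ C l)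
  (hr : IsJoiningSystem Z κ i₀ R p r)
include hdisj hp hr

lemma mem_colorSet_or_of_mem_joinedSet {i : ι} {x : E} (hx : x ∈ joinedSet κ C i₀ R p r i) :
    x ∈ colorSet κ C i₀ R i ∨ x ∈ ball (0 : E) R ∧ ∀ b, x ∉ Z b := by
  rcases hx with hx | hx
  · exact Or.inl hx
  simp only [mem_iUnion] at hx
  obtain ⟨l, rfl, hx⟩ := hx
  have hpl : p l ∈ colorSet κ C i₀ R (κ l) := Or.inl ⟨l, rfl, hp l⟩
  by_cases hb : ∃ b, x ∈ Z b
  · obtain ⟨b, hb⟩ := hb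
    exact Or.inl (hr.eq_of_mem l b x hx hb ▸ hpl)
  by_cases hl : κ l = i₀
  · rcases lt_or_ge ‖x‖ R with hxR | hxR
    · exact Or.inr ⟨mem_ball_zero_iff.2 hxR, not_exists.1 hb⟩
    · exact Or.inl (Or.inr ⟨hl, hxR⟩)
  · refine Or.inr ⟨?_, not_exists.1 hb⟩
    obtain ⟨o, ho, hol⟩ := hr.center _ hl
    have hpR : p l ∈ ball (0 : E) R := by
      rw [mem_ball_zero_iff]
      by_contra! hpR
      exact disjoint_left.1 (hdisj hl) hpl (Or.inr ⟨rfl, hpR⟩)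
    exact (convex_ball (0 : E) R).segment_subset (hol l rfl ▸ ho) hpR hx

lemma pairwise_disjoint_joinedSet (hCZ : ∀ l, C l ⊆ ⋃ b, Z b) :
    Pairwise (Function.onFun Disjoint (joinedSet κ C i₀ R p r)) := by
  have hmemZ : ∀ i x, x ∈ colorSet κ C i₀ R i → x ∈ ball (0 : E) R → ∃ b, x ∈ Z b := by
    rintro i x (⟨l, -, hx⟩ | ⟨-, hx⟩) hxR
    · simpa using hCZ l hx
    · exact absurd (mem_ball_zero_iff.1 hxR) hx.not_gt
  intro i j hij
  refine disjoint_left.2 fun x hi hj ↦ ?_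
  rcases mem_colorSet_or_of_mem_joinedSet hdisj hp hr hi with hi' | ⟨hxR, hxZ⟩
  · rcases mem_colorSet_or_of_mem_joinedSet hdisj hp hr hj with hj' | ⟨hxR, hxZ⟩
    · exact disjoint_left.1 (hdisj hij) hi' hj'
    · exact not_exists.2 hxZ (hmemZ i x hi' hxR)
  · have hsegment : ∀ k, x ∈ joinedSet κ C i₀ R p r k →
        ∃ l, κ l = k ∧ x ∈ segment ℝ (r l) (p l) := by
      rintro k (hx | hx)
      · exact absurd (hmemZ k x hx hxR) (not_exists.2 hxZ)
      · simpa using hx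
    obtain ⟨l, rfl, hl⟩ := hsegment i hi
    obtain ⟨l', rfl, hl'⟩ := hsegment j hj
    exact not_exists.2 hxZ (hr.mem_of_mem_of_mem l l' hij x hl hl' hxR)

end Separation

lemma exists_one_le_norm_lineMap_ge (R : ℝ) {o q : E} (hqo : q ≠ o) :
    ∃ t : ℝ, 1 ≤ t ∧ R ≤ ‖AffineMap.lineMap o q t‖ := by
  have hpos : 0 < ‖q - o‖ := norm_pos_iff.2 (sub_ne_zero.2 hqo)
  refine ⟨max 1 ((R + ‖o‖) / ‖q - o‖), le_max_left _ _, ?_⟩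
  set t := max 1 ((R + ‖o‖) / ‖q - o‖)
  have ht : R + ‖o‖ ≤ ‖t • (q - o)‖ := by
    rw [norm_smul, Real.norm_of_nonneg (by positivity), ← div_le_iff₀ hpos]
    exact le_max_right _ _
  have htri := norm_sub_norm_le (t • (q - o)) (-o)
  rw [norm_neg, sub_neg_eq_add] at htri
  rw [AffineMap.lineMap_apply, vsub_eq_sub, vadd_eq_add]
  linarith

lemma eq_of_lineMap_eq_lineMap {W : AffineSubspace ℝ E} {o u v : E} (hu : u ≠ o)
    (hW : ∀ t : ℝ, AffineMap.lineMap o u t ∈ W → t = 1) (hv : v ∈ W) {s t : ℝ} (hs : 1 ≤ s)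
    (ht : t ≤ 1) (h : AffineMap.lineMap o u s = AffineMap.lineMap o v t) :
    AffineMap.lineMap o u s = v := by
  have hdiff : s • (u - o) = t • (v - o) := by
    simpa [AffineMap.lineMap_apply] using h
  have ht0 : t ≠ 0 := by
    rintro rfl
    rw [zero_smul, smul_eq_zero, sub_eq_zero] at hdiff
    exact hdiff.elim (fun hs0 ↦ by linarith) hu
  have hline : AffineMap.lineMap o u (t⁻¹ * s) = v := by
    rw [AffineMap.lineMap_apply, vsub_eq_sub, mul_smul, hdiff, inv_smul_smul₀ ht0,
      vadd_eq_add, sub_add_cancel]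
  have hst : t = s := (inv_mul_eq_one₀ ht0).1 (hW _ (hline ▸ hv))
  rw [h, le_antisymm ht (hst ▸ hs), AffineMap.lineMap_apply_one]

section Existence

variable [FiniteDimensional ℝ E] [Finite β] [Finite γ]
  (hZ : ∀ b, finrank ℝ (Z b).direction + 2 ≤ finrank ℝ E)
include hZ

lemma exists_mem_open_lineMap_avoid (hE : 3 ≤ finrank ℝ E) (p o : γ → E) {U : Set E}
    (hU : IsOpen U) (hne : U.Nonempty) :
    ∃ c ∈ U, (∀ l b (t : ℝ), AffineMap.lineMap c (p l) t ∈ Z b → t = 1) ∧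
      ∀ l l' (t t' : ℝ), AffineMap.lineMap c (p l) t = AffineMap.lineMap (o l') (p l') t' →
        t = 1 := by
  have finrank_direction_add_two_le (b : β ⊕ γ) :
      finrank ℝ (Sum.elim Z (fun l ↦ affineSpan ℝ {o l, p l}) b).direction + 2 ≤ finrank ℝ E := by
    rcases b with b | l
    · exact hZ b
    · refine (Nat.add_le_add_right (m := 1) ?_ 2).trans hE
      rw [Sum.elim_inr, direction_affineSpan]
      exact collinear_iff_finrank_le_one.1 (collinear_pair ℝ _ _)
  obtain ⟨c, hcU, -, hc⟩ := exists_mem_open_lines_avoid finrank_direction_add_two_le p hU hne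
  exact ⟨c, hcU, fun l b ↦ hc (Sum.inl b) l, fun l l' t t' h ↦ hc (Sum.inr l') l t
    (h ▸ AffineMap.lineMap_mem_affineSpan_pair _ _ _)⟩

lemma exists_centers [Finite ι] (hE : 3 ≤ finrank ℝ E) (κ : γ → ι) (p : γ → E) {U : ι → Set E}
    (hU : ∀ i, IsOpen (U i)) (hne : ∀ i, (U i).Nonempty) :
    ∃ o : ι → E, (∀ i, o i ∈ U i) ∧
      (∀ l b (t : ℝ), AffineMap.lineMap (o (κ l)) (p l) t ∈ Z b → t = 1) ∧
      ∀ l l', κ l ≠ κ l' → ∀ t t' : ℝ, AffineMap.lineMap (o (κ l)) (p l) t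
        = AffineMap.lineMap (o (κ l')) (p l') t' → t = 1 ∨ t' = 1 := by
  classical
  have := Fintype.ofFinite ι
  suffices H : ∀ s : Finset ι, ∃ o : ι → E, (∀ i ∈ s, o i ∈ U i) ∧
      (∀ l, κ l ∈ s → ∀ b (t : ℝ), AffineMap.lineMap (o (κ l)) (p l) t ∈ Z b → t = 1) ∧
      ∀ l, κ l ∈ s → ∀ l', κ l' ∈ s → κ l ≠ κ l' → ∀ t t' : ℝ,
        AffineMap.lineMap (o (κ l)) (p l) t = AffineMap.lineMap (o (κ l')) (p l') t' →
          t = 1 ∨ t' = 1 by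
    simpa using H Finset.univ
  intro s
  induction s using Finset.induction_on with
  | empty => exact ⟨0, by simp⟩
  | insert a s ha ih =>
    obtain ⟨o, hoU, hoZ, ho⟩ := ih
    obtain ⟨c, hcU, hcZ, hcl⟩ :=
      exists_mem_open_lineMap_avoid hZ hE p (o ∘ κ) (hU a) (hne a)
    have hold : ∀ i ∈ s, Function.update o a c i = o i := fun i hi ↦
      Function.update_of_ne (ne_of_mem_of_not_mem hi ha) _ _
    have hnew : ∀ i, i = a → Function.update o a c i = c := fun i hi ↦ by simp [hi]
    refine ⟨Function.update o a c, fun i hi ↦ ?_, fun l hl b t ↦ ?_, fun l hl l' hl' hll' t t' ↦ ?_⟩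
    · rcases Finset.mem_insert.1 hi with rfl | hi
      · simpa using hcU
      · simpa [hold i hi] using hoU i hi
    · rcases Finset.mem_insert.1 hl with hl | hl
      · rw [hnew _ hl]
        exact hcZ l b t
      · rw [hold _ hl]
        exact hoZ l hl b t
    · rcases Finset.mem_insert.1 hl with hl | hl <;> rcases Finset.mem_insert.1 hl' with hl' | hl'
      · exact absurd (hl.trans hl'.symm) hll'
      · rw [hnew _ hl, hold _ hl']
        exact fun h ↦ Or.inl (hcl l l' t t' h)
      · rw [hold _ hl, hnew _ hl']
        exact fun h ↦ Or.inr (hcl l' l t' t h.symm)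
      · rw [hold _ hl, hold _ hl']
        exact ho l hl l' hl' hll' t t'

lemma exists_isJoiningSystem_of_three_le_finrank [Finite ι] (hE : 3 ≤ finrank ℝ E) (hR : 0 < R)
    (κ : γ → ι) (i₀ : ι) {p : γ → E} (hp : ∀ l, ∃ b, p l ∈ Z b) :
    ∃ r, IsJoiningSystem Z κ i₀ R p r := by
  classical
  have : Nontrivial E := finrank_pos_iff.1 (by omega : 0 < finrank ℝ E)
  obtain ⟨o, hoU, hoZ, ho⟩ := exists_centers hZ hE κ p
    (U := fun i ↦ if i = i₀ then {x | R < ‖x‖} else ball 0 R)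
    (fun i ↦ by split_ifs; exacts [isOpen_lt continuous_const continuous_norm, isOpen_ball])
    (fun i ↦ by split_ifs; exacts [NormedSpace.exists_lt_norm ℝ E R, nonempty_ball.2 hR])
  refine ⟨fun l ↦ o (κ l), fun l hl ↦ ?_, fun i hi ↦ ⟨o i, ?_, fun l hl ↦ by rw [hl]⟩,
    fun l b q hq hqb ↦ ?_, fun l l' hll' q hq hq' _ ↦ ?_⟩
  · have hout := hoU (κ l)
    rw [if_pos hl] at hout
    exact le_of_lt hout
  · simpa [hi] using hoU i
  · rw [segment_eq_image_lineMap] at hq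
    obtain ⟨t, -, rfl⟩ := hq
    rw [hoZ l b t hqb, AffineMap.lineMap_apply_one]
  · rw [segment_eq_image_lineMap] at hq hq'
    obtain ⟨t, -, rfl⟩ := hq
    obtain ⟨t', -, ht'⟩ := hq'
    rcases ho l l' hll' t t' ht'.symm with rfl | rfl
    · simpa using hp l
    · simpa [← ht'] using hp l'

lemma exists_isJoiningSystem_of_two_colors (hR : 0 < R) {κ : γ → ι} {i₀ : ι}
    (hκ : ∀ i j, i ≠ j → i = i₀ ∨ j = i₀) {p : γ → E} (hp : ∀ l, ∃ b, p l ∈ Z b) :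
    ∃ r, IsJoiningSystem Z κ i₀ R p r := by
  classical
  obtain ⟨o, hoR, hoZ, ho⟩ := exists_mem_open_lines_avoid hZ p isOpen_ball (nonempty_ball.2 hR)
  have hpo : ∀ l, p l ≠ o := fun l h ↦ by
    obtain ⟨b, hb⟩ := hp l
    exact hoZ b (h ▸ hb)
  choose S hS hSR using fun l ↦ exists_one_le_norm_lineMap_ge R (hpo l)
  let τ : γ → ℝ := fun l ↦ if κ l = i₀ then S l else 0
  have hparam : ∀ l, ∀ q ∈ segment ℝ (AffineMap.lineMap o (p l) (τ l)) (p l),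
      ∃ t : ℝ, AffineMap.lineMap o (p l) t = q ∧ (κ l = i₀ → 1 ≤ t) ∧ (κ l ≠ i₀ → t ≤ 1) := by
    intro l q hq
    nth_rewrite 2 [← AffineMap.lineMap_apply_one (k := ℝ) o (p l)] at hq
    rw [← image_segment, segment_eq_uIcc] at hq
    obtain ⟨t, ht, rfl⟩ := hq
    refine ⟨t, rfl, fun hl ↦ ?_, fun hl ↦ ?_⟩
    · simpa [τ, hl, hS l] using ht.1
    · simpa [τ, hl] using ht.2
  have hmeet : ∀ l l', κ l = i₀ → κ l' ≠ i₀ →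
      ∀ q ∈ segment ℝ (AffineMap.lineMap o (p l) (τ l)) (p l),
      q ∈ segment ℝ (AffineMap.lineMap o (p l') (τ l')) (p l') → ∃ b, q ∈ Z b := by
    intro l l' hl hl' q hq hq'
    obtain ⟨s, rfl, hs, -⟩ := hparam l q hq
    obtain ⟨t, ht, -, ht1⟩ := hparam l' _ hq'
    obtain ⟨b, hb⟩ := hp l'
    exact ⟨b, eq_of_lineMap_eq_lineMap (hpo l) (ho b l) hb (hs hl) (ht1 hl') ht.symm ▸ hb⟩
  refine ⟨fun l ↦ AffineMap.lineMap o (p l) (τ l), fun l hl ↦ ?_,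
    fun i hi ↦ ⟨o, hoR, fun l hl ↦ ?_⟩, fun l b q hq hqb ↦ ?_, fun l l' hll' q hq hq' _ ↦ ?_⟩
  · simpa [τ, hl] using hSR l
  · simp [τ, hl, hi]
  · obtain ⟨t, rfl, -⟩ := hparam l q hq
    rw [ho b l t hqb, AffineMap.lineMap_apply_one]
  · rcases hκ _ _ hll' with hl | hl'
    · exact hmeet l l' hl (fun hl' ↦ hll' (hl.trans hl'.symm)) q hq hq'
    · exact hmeet l' l hl' (fun hl ↦ hll' (hl.trans hl'.symm)) q hq' hq

end Existence

end Joining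

section Pieces

variable {E F : Type*} [NormedAddCommGroup E] [NormedSpace ℝ E] [NormedAddCommGroup F]
  [NormedSpace ℝ F]

/-- A cover of `D` by convex pieces `P l` on which `ψ` agrees with affine maps `A l` that are in
general position with respect to the subspaces `S s`: preimages are empty or have the expected
dimension. -/
structure IsTransversePieces {σ Λ : Type*} (S : σ → Submodule ℝ F) (D : Set E) (ψ : E → F)
    (P : Λ → Set E) (A : Λ → E →ᵃ[ℝ] F) : Prop where
  convex : ∀ l, Convex ℝ (P l)
  iUnion_eq : ⋃ l, P l = D
  eqOn : ∀ l, EqOn ψ (A l) (P l)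
  transverse : ∀ l s, (∀ x, A l x ∉ S s) ∨
    finrank ℝ ((S s).toAffineSubspace.comap (A l)).direction + finrank ℝ F
      = finrank ℝ E + finrank ℝ (S s)

lemma add_smul_sub_ne_zero {u v : F} (hu : ‖u‖ = 1) (huv : ‖v - u‖ < 1) {t : ℝ}
    (ht : t ∈ Icc (0 : ℝ) 1) : u + t • (v - u) ≠ 0 := fun h ↦ by
  have hnorm : 1 = t * ‖v - u‖ := by
    rw [← Real.norm_of_nonneg ht.1, ← norm_smul, ← norm_neg, ← eq_neg_of_add_eq_zero_left h, hu]
  exact (mul_lt_one_of_nonneg_of_lt_one_right ht.2 (norm_nonneg _) huv).ne hnorm.symm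

lemma exists_transverse_perturbation [FiniteDimensional ℝ E] [FiniteDimensional ℝ F] {σ : Type*}
    [Finite σ] (S : σ → Submodule ℝ F) {Φ : E → F} (hΦ : Continuous Φ) (hΦ1 : ∀ x, ‖Φ x‖ = 1)
    {a : F} {R : ℝ} (hΦR : ∀ x, R ≤ ‖x‖ → Φ x = a) {V : Set F} (hV : V ∈ 𝓝 a) :
    ∃ ψ : E → F, Continuous ψ ∧ (∀ x, ∀ t ∈ Icc (0 : ℝ) 1, Φ x + t • (ψ x - Φ x) ≠ 0) ∧
      (∀ x, R + 1 ≤ ‖x‖ → ψ x = a) ∧ (∀ x, R ≤ ‖x‖ → ψ x ∈ V) ∧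
      ∃ (Λ : Type) (_ : Finite Λ) (P : Λ → Set E) (A : Λ → E →ᵃ[ℝ] F),
        IsTransversePieces S (closedBall 0 R) ψ P A := by
  obtain ⟨δ, hδ, hδV⟩ := Metric.mem_nhds_iff.1 hV
  obtain ⟨f, hf, hfΦ, Λ, hΛ, P, A, hP, hcover, hA, htrans⟩ :=
    exists_piecewiseAffine_near_transverse S (isCompact_closedBall (0 : E) (R + 1)) hΦ
      (lt_min one_pos hδ)
  let χ : E → ℝ := fun x ↦ max 0 (min 1 (R + 1 - ‖x‖))
  have hχ0 : ∀ x, R + 1 ≤ ‖x‖ → χ x = 0 := fun x hx ↦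
    max_eq_left ((min_le_right _ _).trans (by linarith))
  have hχ1 : ∀ x, ‖x‖ ≤ R → χ x = 1 := fun x hx ↦ by
    simp only [χ]
    rw [min_eq_left (by linarith), max_eq_right zero_le_one]
  let ψ : E → F := fun x ↦ Φ x + χ x • (f x - Φ x)
  have hψΦ : ∀ x, ‖ψ x - Φ x‖ < min 1 δ := fun x ↦ by
    have hnorm : ‖ψ x - Φ x‖ = χ x * ‖f x - Φ x‖ := by
      rw [add_sub_cancel_left, norm_smul, Real.norm_of_nonneg (le_max_left _ _)]
    rw [hnorm]
    rcases le_total ‖x‖ (R + 1) with hx | hx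
    · exact (mul_le_of_le_one_left (norm_nonneg _) (max_le zero_le_one (min_le_left _ _))).trans_lt
        (hfΦ x (mem_closedBall_zero_iff.2 hx))
    · rw [hχ0 x hx, zero_mul]
      exact lt_min one_pos hδ
  refine ⟨ψ, by fun_prop, fun x t ht ↦
      add_smul_sub_ne_zero (hΦ1 x) ((hψΦ x).trans_le (min_le_left _ _)) ht,
    fun x hx ↦ ?_, fun x hx ↦ hδV ?_, Λ, hΛ, fun l ↦ P l ∩ closedBall 0 R, A, ?_⟩
  · simp only [ψ]
    rw [hχ0 x hx, zero_smul, add_zero, hΦR x (by linarith)]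
  · rw [mem_ball_iff_norm, ← hΦR x hx]
    exact (hψΦ x).trans_le (min_le_right _ _)
  · refine ⟨fun l ↦ (hP l).inter (convex_closedBall _ _), ?_, fun l x hx ↦ ?_, htrans⟩
    · rw [← iUnion_inter, iUnion_eq_univ_iff.2 hcover, univ_inter]
    · simp only [ψ]
      rw [hχ1 x (mem_closedBall_zero_iff.1 hx.2), one_smul, add_sub_cancel, hA l hx.1]

lemma notMem_cone_of_mem_openRay {u v w : F} (hu : ‖u‖ = 1) (hv : ‖v‖ = 1) (huv : u ≠ v)
    (hw : w ∈ openRay v) : w ∉ cone u v := by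
  obtain ⟨s, hs, rfl⟩ := hw
  rintro ⟨α, β, hα, hβ, h⟩
  rw [eq_sub_iff_add_eq, ← add_smul] at h
  exact huv (eq_of_smul_eq_smul hv hu (by positivity) hα h).symm

lemma openRay_subset_cone (u v : F) : openRay u ⊆ cone u v := by
  rintro _ ⟨s, hs, rfl⟩
  exact ⟨s, 0, hs.le, le_rfl, by rw [zero_smul, sub_zero]⟩

lemma convex_openRay (u : F) : Convex ℝ (openRay u) := by
  rintro _ ⟨s, hs, rfl⟩ _ ⟨t, ht, rfl⟩ a b ha hb hab
  exact ⟨a * s + b * t, convex_Ioi (0 : ℝ) hs ht ha hb hab, by module⟩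

lemma mem_openRay_iff_eq_norm_smul {u w : F} (hu : ‖u‖ = 1) (hw : w ≠ 0) :
    w ∈ openRay u ↔ w = ‖w‖ • u := by
  refine ⟨?_, fun h ↦ ⟨‖w‖, norm_pos_iff.2 hw, h⟩⟩
  rintro ⟨s, hs, rfl⟩
  rw [norm_smul, hu, Real.norm_of_nonneg hs.le, mul_one]

variable {ι Λ : Type*}

/-- The span of two of the vectors `y i`. -/
abbrev pairSpan (y : ι → F) (s : ι × ι) : Submodule ℝ F := Submodule.span ℝ {y s.1, y s.2}

lemma openRay_subset_pairSpan (y : ι → F) (i j : ι) : openRay (y i) ⊆ pairSpan y (i, j) := by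
  rintro _ ⟨s, -, rfl⟩
  exact Submodule.smul_mem _ _ (Submodule.subset_span (Or.inl rfl))

lemma cone_subset_pairSpan (y : ι → F) (i j : ι) : cone (y j) (y i) ⊆ pairSpan y (i, j) := by
  rintro _ ⟨α, β, -, -, rfl⟩
  exact sub_mem (Submodule.smul_mem _ _ (Submodule.subset_span (Or.inr rfl)))
    (Submodule.smul_mem _ _ (Submodule.subset_span (Or.inl rfl)))

/-- The points that the affine map `A l` sends into the span of two of the `y i`. -/
def exceptionalSpace (y : ι → F) (A : Λ → E →ᵃ[ℝ] F) (b : Λ × ι × ι) : AffineSubspace ℝ E :=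
  (pairSpan y b.2).toAffineSubspace.comap (A b.1)

/-- The points of `P l` that the affine map `A l` sends to the open ray through `y i`. -/
def rayPiece (y : ι → F) (P : Λ → Set E) (A : Λ → E →ᵃ[ℝ] F) (l : Λ × ι) : Set E :=
  P l.1 ∩ A l.1 ⁻¹' openRay (y l.2)

lemma rayPiece_subset_exceptionalSpace (y : ι → F) (P : Λ → Set E) (A : Λ → E →ᵃ[ℝ] F)
    (l : Λ × ι) : rayPiece y P A l ⊆ exceptionalSpace y A (l.1, l.2, l.2) :=
  fun _ hx ↦ openRay_subset_pairSpan y _ _ hx.2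

namespace IsTransversePieces

variable {y : ι → F} {D : Set E} {ψ : E → F} {P : Λ → Set E} {A : Λ → E →ᵃ[ℝ] F}
  (h : IsTransversePieces (pairSpan y) D ψ P A)
include h

lemma convex_rayPiece (l : Λ × ι) : Convex ℝ (rayPiece y P A l) :=
  (h.convex l.1).inter ((convex_openRay _).affine_preimage _)

lemma mem_rayPiece_iff {l : Λ × ι} {x : E} :
    x ∈ rayPiece y P A l ↔ x ∈ P l.1 ∧ ψ x ∈ openRay (y l.2) :=
  and_congr_right fun hx ↦ by rw [h.eqOn l.1 hx, mem_preimage]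

lemma mem_exceptionalSpace {l : Λ} {s : ι × ι} {x : E} (hx : x ∈ P l) (hψ : ψ x ∈ pairSpan y s) :
    x ∈ exceptionalSpace y A (l, s) := by
  rwa [h.eqOn l hx] at hψ

lemma finrank_direction_exceptionalSpace_add_two_le (hE : 2 ≤ finrank ℝ E)
    (hspan : ∀ s, finrank ℝ (pairSpan y s) + 2 ≤ finrank ℝ F) (b : Λ × ι × ι) :
    finrank ℝ (exceptionalSpace y A b).direction + 2 ≤ finrank ℝ E := by
  rcases h.transverse b.1 b.2 with hempty | hdim
  · have hbot : exceptionalSpace y A b = ⊥ :=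
      (AffineSubspace.coe_eq_bot_iff _).1 (eq_empty_of_forall_notMem hempty)
    rwa [hbot, AffineSubspace.direction_bot, finrank_bot, zero_add]
  · have hb := hspan b.2
    change _ + finrank ℝ F = _ at hdim
    unfold exceptionalSpace
    omega

lemma three_le_finrank_of_nonempty_rayPiece (hF : 4 ≤ finrank ℝ F) {l : Λ × ι}
    (hl : (rayPiece y P A l).Nonempty) : 3 ≤ finrank ℝ E := by
  obtain ⟨x, hx⟩ := hl
  have hdim := (h.transverse l.1 (l.2, l.2)).resolve_left fun hempty ↦
    hempty x (rayPiece_subset_exceptionalSpace y P A l hx)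
  have hline : finrank ℝ (pairSpan y (l.2, l.2)) ≤ 1 := by
    rw [pairSpan, pair_eq_singleton]
    simpa using finrank_span_le_card (R := ℝ) {y l.2}
  omega

end IsTransversePieces

end Pieces

section FiberJoining

variable {E F : Type*} [NormedAddCommGroup E] [NormedSpace ℝ E] [NormedAddCommGroup F]
  [NormedSpace ℝ F] {ι Λ : Type*}

section ColorSet

variable {y : ι → F} (hy : ∀ i, ‖y i‖ = 1) (hinj : Function.Injective y) {i₀ : ι} {R : ℝ}
  {ψ : E → F} {P : Λ → Set E} {A : Λ → E →ᵃ[ℝ] F}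
  (h : IsTransversePieces (pairSpan y) (closedBall 0 R) ψ P A)
  (hout : ∀ x, R ≤ ‖x‖ → ∀ j ≠ i₀, ψ x ∉ cone (y j) (y i₀))

/-- The set of colour `i` cut out by `ψ` on the nonempty pieces `rayPiece y P A l`. -/
abbrev rayColorSet (y : ι → F) (P : Λ → Set E) (A : Λ → E →ᵃ[ℝ] F) (i₀ : ι) (R : ℝ) (i : ι) :
    Set E :=
  colorSet (γ := {l // (rayPiece y P A l).Nonempty}) (fun l ↦ l.1.2) (fun l ↦ rayPiece y P A l.1)
    i₀ R i

section

include h hout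

lemma mem_rayColorSet_iff {i : ι} {x : E} :
    x ∈ rayColorSet y P A i₀ R i ↔ ψ x ∈ openRay (y i) ∨ i = i₀ ∧ R ≤ ‖x‖ := by
  refine ⟨fun hx ↦ hx.imp_left ?_, fun hx ↦ ?_⟩
  · rintro ⟨l, rfl, hl⟩
    exact (h.mem_rayPiece_iff.1 hl).2
  · rcases hx with hx | hx
    · rcases le_total R ‖x‖ with hxR | hxR
      · refine Or.inr ⟨?_, hxR⟩
        by_contra hi
        exact hout x hxR i hi (openRay_subset_cone _ _ hx)
      · obtain ⟨l, hl⟩ := mem_iUnion.1 (h.iUnion_eq ▸ mem_closedBall_zero_iff.2 hxR)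
        have hpiece : x ∈ rayPiece y P A (l, i) := h.mem_rayPiece_iff.2 ⟨hl, hx⟩
        exact Or.inl ⟨⟨(l, i), x, hpiece⟩, rfl, hpiece⟩
    · exact Or.inr hx

include hy

lemma isClosed_rayColorSet (hψ : Continuous ψ) (hψ0 : ∀ x, ψ x ≠ 0) (i : ι) :
    IsClosed (rayColorSet y P A i₀ R i) := by
  have heq : rayColorSet y P A i₀ R i = {x | ψ x = ‖ψ x‖ • y i} ∪ {x | i = i₀ ∧ R ≤ ‖x‖} := by
    ext x
    rw [mem_rayColorSet_iff h hout, mem_openRay_iff_eq_norm_smul (hy i) (hψ0 x)]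
    rfl
  rw [heq]
  exact (isClosed_eq hψ (by fun_prop)).union
    (isClosed_const.inter (isClosed_le continuous_const continuous_norm))

include hinj

lemma pairwise_disjoint_rayColorSet :
    Pairwise (Function.onFun Disjoint (rayColorSet y P A i₀ R)) := fun i j hij ↦
  disjoint_left.2 fun x hi hj ↦ by
    rw [mem_rayColorSet_iff h hout] at hi hj
    rcases hi with hi | ⟨rfl, hxR⟩
    · rcases hj with hj | ⟨rfl, hxR⟩
      · exact hij (openRay_eq_of_mem hy hinj hi hj)
      · exact hout x hxR i hij (openRay_subset_cone _ _ hi)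
    · rcases hj with hj | ⟨rfl, -⟩
      · exact hout x hxR j hij.symm (openRay_subset_cone _ _ hj)
      · exact hij rfl

end

section

variable [Finite ι] [Finite Λ] [FiniteDimensional ℝ E] (hE : 2 ≤ finrank ℝ E)
  (hspan : ∀ s, finrank ℝ (pairSpan y s) + 2 ≤ finrank ℝ F)
  (hcase : 4 ≤ finrank ℝ F ∨ ∀ i j, i ≠ j → i = i₀ ∨ j = i₀) (hR : 0 < R)
include h hE hspan hcase hR

lemma exists_isJoiningSystem_rayPiece {p : {l // (rayPiece y P A l).Nonempty} → E}
    (hp : ∀ l, p l ∈ rayPiece y P A l.1) :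
    ∃ r, IsJoiningSystem (exceptionalSpace y A) (fun l ↦ l.1.2) i₀ R p r := by
  have hZ := h.finrank_direction_exceptionalSpace_add_two_le hE hspan
  have hpZ : ∀ l, ∃ b, p l ∈ exceptionalSpace y A b := fun l ↦
    ⟨_, rayPiece_subset_exceptionalSpace y P A l.1 (hp l)⟩
  rcases hcase with hF | htwo
  · rcases isEmpty_or_nonempty {l // (rayPiece y P A l).Nonempty} with _ | ⟨⟨l, hl⟩⟩
    · exact ⟨isEmptyElim, isEmptyElim, fun i _ ↦ ⟨0, mem_ball_self hR, isEmptyElim⟩, isEmptyElim,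
        isEmptyElim⟩
    · exact exists_isJoiningSystem_of_three_le_finrank hZ
        (h.three_le_finrank_of_nonempty_rayPiece hF hl) hR _ i₀ hpZ
  · exact exists_isJoiningSystem_of_two_colors hZ hR (fun l l' ↦ htwo l l') hpZ

variable (hψ : Continuous ψ) (hψ0 : ∀ x, ψ x ≠ 0)
include hy hinj hout hψ hψ0

lemma exists_push_fibers_isPrepathConnected [Nontrivial ι] :
    ∃ (θ : E → F) (K : ι → Set E), Continuous θ ∧
      (∀ x, ∀ t ∈ Icc (0 : ℝ) 1, ψ x + t • θ x ≠ 0) ∧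
      (∀ x i, ψ x + θ x ∈ openRay (y i) ↔ x ∈ K i) ∧ (∀ i, ∀ x ∈ K i, ψ x + θ x = y i) ∧
      (∀ x, R ≤ ‖x‖ → x ∈ K i₀) ∧ ∀ i, IsPrepathConnected (K i) := by
  choose p hp using fun l : {l // (rayPiece y P A l).Nonempty} ↦ l.2
  obtain ⟨r, hr⟩ := exists_isJoiningSystem_rayPiece h hE hspan hcase hR hp
  have hdisj := pairwise_disjoint_rayColorSet hy hinj h hout
  let K := joinedSet (fun l : {l // (rayPiece y P A l).Nonempty} ↦ l.1.2)
    (fun l ↦ rayPiece y P A l.1) i₀ R p r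
  have hcone : ∀ i j, j ≠ i → ∀ x ∈ K i, ψ x ∉ cone (y j) (y i) := fun i j hij x hx hmem ↦ by
    rcases mem_colorSet_or_of_mem_joinedSet hdisj hp hr hx with hx | ⟨hxR, hxZ⟩
    · rcases (mem_rayColorSet_iff h hout).1 hx with hx | ⟨rfl, hxR⟩
      · exact notMem_cone_of_mem_openRay (hy j) (hy i) (hinj.ne hij) hx hmem
      · exact hout x hxR j hij hmem
    · obtain ⟨l, hl⟩ := mem_iUnion.1 (h.iUnion_eq ▸ ball_subset_closedBall hxR)
      exact hxZ _ (h.mem_exceptionalSpace hl (cone_subset_pairSpan y i j hmem))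
  obtain ⟨θ, hθ, hθ0, hθray, hθK⟩ := exists_push hy hinj hψ hψ0 (K := K)
    (fun i ↦ isClosed_joinedSet (isClosed_rayColorSet hy h hout hψ hψ0 i))
    (pairwise_disjoint_joinedSet hdisj hp hr fun l x hx ↦
      mem_iUnion.2 ⟨_, rayPiece_subset_exceptionalSpace y P A l.1 hx⟩)
    (fun x i hx ↦ Or.inl ((mem_rayColorSet_iff h hout).2 (Or.inl hx))) hcone
  have hrank : 1 < Module.rank ℝ E := by
    rw [← finrank_eq_rank]
    exact_mod_cast hE
  exact ⟨θ, K, hθ, hθ0, hθray, hθK, fun x hx ↦ Or.inl (Or.inr ⟨rfl, hx⟩),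
    isPrepathConnected_joinedSet hrank hR (fun l ↦ h.convex_rayPiece l.1) hp hr⟩

end

end ColorSet

lemma exists_unit_homotopy {X : Type*} [TopologicalSpace X] {Φ ψ θ : X → F} (hΦ : Continuous Φ)
    (hψ : Continuous ψ) (hθ : Continuous θ) (hΦ1 : ∀ x, ‖Φ x‖ = 1)
    (hΦψ : ∀ x, ∀ t ∈ Icc (0 : ℝ) 1, Φ x + t • (ψ x - Φ x) ≠ 0)
    (hψθ : ∀ x, ∀ t ∈ Icc (0 : ℝ) 1, ψ x + t • θ x ≠ 0) :
    ∃ H : unitInterval × X → F, Continuous H ∧ (∀ z, ‖H z‖ = 1) ∧ (∀ x, H (0, x) = Φ x) ∧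
      (∀ x, H (1, x) = ‖ψ x + θ x‖⁻¹ • (ψ x + θ x)) ∧
      ∀ t x, ψ x = Φ x → θ x = 0 → H (t, x) = Φ x := by
  let N : unitInterval × X → F := fun z ↦ Φ z.2 + min 1 (2 * (z.1 : ℝ)) • (ψ z.2 - Φ z.2)
    + max 0 (2 * (z.1 : ℝ) - 1) • θ z.2
  have hN0 : ∀ z, N z ≠ 0 := by
    rintro ⟨t, x⟩
    rcases le_total (t : ℝ) (1 / 2) with ht | ht
    · simp only [N]
      rw [max_eq_left (by linarith), min_eq_right (by linarith), zero_smul, add_zero]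
      exact hΦψ x _ ⟨by linarith [t.2.1], by linarith⟩
    · simp only [N]
      rw [max_eq_right (by linarith), min_eq_left (by linarith), one_smul, add_sub_cancel]
      exact hψθ x _ ⟨by linarith, by linarith [t.2.2]⟩
  have hnormalize : ∀ z x, N z = Φ x → ‖N z‖⁻¹ • N z = Φ x := fun z x hz ↦ by
    rw [hz, hΦ1, inv_one, one_smul]
  refine ⟨fun z ↦ ‖N z‖⁻¹ • N z, ?_, fun z ↦ ?_, fun x ↦ hnormalize _ _ ?_, fun x ↦ ?_,
    fun t x hψx hθx ↦ hnormalize _ _ ?_⟩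
  · have hN : Continuous N := by fun_prop
    exact (hN.norm.inv₀ fun z ↦ norm_ne_zero_iff.2 (hN0 z)).smul hN
  · rw [norm_smul, norm_inv, norm_norm, inv_mul_cancel₀ (norm_ne_zero_iff.2 (hN0 z))]
  · simp [N]
  · have hN1 : N (1, x) = ψ x + θ x := by
      simp only [N, Icc.coe_one]
      norm_num
    simp only [hN1]
  · simp [N, hψx, hθx]

/-- A homotopy of maps `E → Y`, relative to the exterior of a ball of radius `R + 1`, from `Φ` to
a map that is constant on `R ≤ ‖x‖` and whose fibres over all `y i` are empty or path connected. -/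
structure IsFiberJoiningHomotopy {Y : Type*} [TopologicalSpace Y] (H : unitInterval × E → Y)
    (Φ : E → Y) (y : ι → Y) (i₀ : ι) (R : ℝ) : Prop where
  continuous : Continuous H
  map_zero : ∀ x, H (0, x) = Φ x
  eq_of_add_one_le : ∀ t x, R + 1 ≤ ‖x‖ → H (t, x) = y i₀
  eq_of_le : ∀ x, R ≤ ‖x‖ → H (1, x) = y i₀
  isPrepathConnected : ∀ i, IsPrepathConnected {x | H (1, x) = y i}

lemma eventually_forall_notMem_cone [Finite ι] {y : ι → F} (hy : ∀ i, ‖y i‖ = 1)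
    (hinj : Function.Injective y) (i₀ : ι) :
    ∀ᶠ w in 𝓝 (y i₀), ∀ j ≠ i₀, w ∉ cone (y j) (y i₀) :=
  Filter.eventually_all.2 fun j ↦ Filter.eventually_imp_distrib_left.2 fun hj ↦
    (isClosed_cone (hy j) (hy i₀) (hinj.ne hj)).isOpen_compl.mem_nhds
      (notMem_cone_of_mem_openRay (hy j) (hy i₀) (hinj.ne hj) ⟨1, one_pos, (one_smul _ _).symm⟩)

lemma exists_isFiberJoiningHomotopy [FiniteDimensional ℝ E] [FiniteDimensional ℝ F] [Finite ι]
    [Nontrivial ι] {y : ι → F} (hy : ∀ i, ‖y i‖ = 1)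
    (hinj : Function.Injective y) {i₀ : ι} (hE : 2 ≤ finrank ℝ E)
    (hspan : ∀ s, finrank ℝ (pairSpan y s) + 2 ≤ finrank ℝ F)
    (hcase : 4 ≤ finrank ℝ F ∨ ∀ i j, i ≠ j → i = i₀ ∨ j = i₀) {Φ : E → F} (hΦ : Continuous Φ)
    (hΦ1 : ∀ x, ‖Φ x‖ = 1) {R : ℝ} (hR : 0 < R) (hΦR : ∀ x, R ≤ ‖x‖ → Φ x = y i₀) :
    ∃ H : unitInterval × E → F, (∀ z, ‖H z‖ = 1) ∧ IsFiberJoiningHomotopy H Φ y i₀ R := by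
  obtain ⟨ψ, hψ, hΦψ, hψR, hψcone, Λ, _, P, A, hPA⟩ := exists_transverse_perturbation (pairSpan y)
    hΦ hΦ1 hΦR (eventually_forall_notMem_cone hy hinj i₀)
  have hψ0 : ∀ x, ψ x ≠ 0 := fun x ↦ by
    simpa using hΦψ x 1 (right_mem_Icc.2 zero_le_one)
  obtain ⟨θ, K, hθ, hψθ, hray, hθK, hRK, hK⟩ := exists_push_fibers_isPrepathConnected hy hinj hPA
    hψcone hE hspan hcase hR hψ hψ0
  obtain ⟨H, hH, hH1, hHΦ, hHψ, hHrel⟩ := exists_unit_homotopy hΦ hψ hθ hΦ1 hΦψ hψθ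
  have hfiber : ∀ i x, H (1, x) = y i ↔ x ∈ K i := fun i x ↦ by
    have hpos : 0 < ‖ψ x + θ x‖ := norm_pos_iff.2 (by
      simpa using hψθ x 1 (right_mem_Icc.2 zero_le_one))
    rw [← hray, mem_openRay_iff_eq_norm_smul (hy i) (norm_pos_iff.1 hpos), hHψ,
      inv_smul_eq_iff₀ hpos.ne']
  refine ⟨H, hH1, hH, hHΦ, fun t x hx ↦ ?_, fun x hx ↦ (hfiber _ _).2 (hRK x hx), fun i ↦ ?_⟩
  · have hΦx : Φ x = y i₀ := hΦR x (by linarith)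
    have hθx : ψ x + θ x = y i₀ := hθK _ x (hRK x (by linarith))
    rw [hψR x hx, add_eq_left] at hθx
    rw [hHrel t x ((hψR x hx).trans hΦx.symm) hθx, hΦx]
  · simpa only [hfiber, ofPred_mem_eq] using hK i

end FiberJoining

section FiberJoiningSphere

variable {E : Type*} [NormedAddCommGroup E] {ι : Type*}

lemma IsFiberJoiningHomotopy.of_isEmbedding {Y Y' : Type*} [TopologicalSpace Y]
    [TopologicalSpace Y'] {Θ : Y → Y'} (hΘ : IsEmbedding Θ) {H : unitInterval × E → Y}
    {H' : unitInterval × E → Y'} (hH : ∀ z, Θ (H z) = H' z) {Φ : E → Y} {y : ι → Y} {i₀ : ι}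
    {R : ℝ} (h : IsFiberJoiningHomotopy H' (fun x ↦ Θ (Φ x)) (fun i ↦ Θ (y i)) i₀ R) :
    IsFiberJoiningHomotopy H Φ y i₀ R where
  continuous := hΘ.continuous_iff.2 (h.continuous.congr fun z ↦ (hH z).symm)
  map_zero x := hΘ.injective ((hH _).trans (h.map_zero x))
  eq_of_add_one_le t x hx := hΘ.injective ((hH _).trans (h.eq_of_add_one_le t x hx))
  eq_of_le x hx := hΘ.injective ((hH _).trans (h.eq_of_le x hx))
  isPrepathConnected i := by simpa only [← hH, hΘ.injective.eq_iff] using h.isPrepathConnected i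

variable [NormedSpace ℝ E] [FiniteDimensional ℝ E] {V : Type*} [NormedAddCommGroup V]
  [InnerProductSpace ℝ V] [FiniteDimensional ℝ V]

lemma exists_homeomorph_sphere_antipode {a b : sphere (0 : V) 1} (hab : b ≠ a) :
    ∃ Θ : sphere (0 : V) 1 ≃ₜ sphere (0 : V) 1, Θ a = a ∧ Θ b = -a := by
  have ha : ‖(a : V)‖ = 1 := norm_eq_of_mem_sphere a
  let e : OnePoint (ℝ ∙ (a : V))ᗮ ≃ₜ sphere (0 : V) 1 := onePointHyperplaneHomeoUnitSphere ha
  have he_infty : e OnePoint.infty = a := rfl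
  have he_zero : e ((0 : (ℝ ∙ (a : V))ᗮ) : OnePoint _) = -a := by
    refine Subtype.ext ?_
    change (stereoInvFun ha 0 : V) = _
    rw [stereoInvFun_apply, coe_neg_sphere]
    norm_num [smul_smul]
  have hb : e.symm b ≠ OnePoint.infty := fun h ↦ hab (by rw [← he_infty, ← h, e.apply_symm_apply])
  obtain ⟨v, hv⟩ := OnePoint.ne_infty_iff_exists.1 hb
  let T := (Homeomorph.addRight (-v)).onePointCongr
  have hTv : T v = ((0 : (ℝ ∙ (a : V))ᗮ) : OnePoint _) :=
    congrArg OnePoint.some (add_neg_cancel v)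
  refine ⟨(e.symm.trans T).trans e, ?_, ?_⟩
  · change e (T (e.symm a)) = a
    rw [e.symm_apply_eq.2 he_infty.symm]
    rfl
  · change e (T (e.symm b)) = -a
    rw [← hv, hTv, he_zero]

variable [Finite ι] [Nontrivial ι] {y : ι → sphere (0 : V) 1} (hinj : Function.Injective y)
  {i₀ : ι} (hE : 2 ≤ finrank ℝ E) {Φ : E → sphere (0 : V) 1} (hΦ : Continuous Φ) {R : ℝ}
  (hR : 0 < R) (hΦR : ∀ x, R ≤ ‖x‖ → Φ x = y i₀)
include hinj hE hΦ hR hΦR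

lemma exists_isFiberJoiningHomotopy_of_homeomorph (Θ : sphere (0 : V) 1 ≃ₜ sphere (0 : V) 1)
    (hspan : ∀ s, finrank ℝ (pairSpan (fun i ↦ (Θ (y i) : V)) s) + 2 ≤ finrank ℝ V)
    (hcase : 4 ≤ finrank ℝ V ∨ ∀ i j, i ≠ j → i = i₀ ∨ j = i₀) :
    ∃ H, IsFiberJoiningHomotopy H Φ y i₀ R := by
  obtain ⟨H, hH1, hH⟩ := exists_isFiberJoiningHomotopy (y := fun i ↦ (Θ (y i) : V))
    (fun i ↦ norm_eq_of_mem_sphere _) ((Subtype.val_injective.comp Θ.injective).comp hinj) hE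
    hspan hcase (Φ := fun x ↦ (Θ (Φ x) : V)) (by fun_prop) (fun x ↦ norm_eq_of_mem_sphere _) hR
    (fun x hx ↦ by rw [hΦR x hx])
  exact ⟨fun z ↦ Θ.symm ⟨H z, mem_sphere_zero_iff_norm.2 (hH1 z)⟩,
    hH.of_isEmbedding (Θ := fun p ↦ (Θ p : V)) (IsEmbedding.subtypeVal.comp Θ.isEmbedding)
      fun z ↦ by rw [Θ.apply_symm_apply]⟩

lemma exists_isFiberJoiningHomotopy_of_four_le_finrank (hV : 4 ≤ finrank ℝ V) :
    ∃ H, IsFiberJoiningHomotopy H Φ y i₀ R := by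
  classical
  refine exists_isFiberJoiningHomotopy_of_homeomorph hinj hE hΦ hR hΦR (.refl _) (fun s ↦ ?_)
    (Or.inl hV)
  have hpair := (finrank_span_finset_le_card (R := ℝ) {(y s.1 : V), (y s.2 : V)}).trans
    Finset.card_le_two
  rw [Finset.coe_pair] at hpair
  exact (Nat.add_le_add_right hpair 2).trans hV

lemma exists_isFiberJoiningHomotopy_of_card_eq_two (hV : 3 ≤ finrank ℝ V) (hι : Nat.card ι = 2) :
    ∃ H, IsFiberJoiningHomotopy H Φ y i₀ R := by
  obtain ⟨j, hj, hall⟩ := (Nat.card_eq_two_iff' i₀).1 hι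
  obtain ⟨Θ, hΘ₀, hΘj⟩ := exists_homeomorph_sphere_antipode (hinj.ne hj)
  have hmem : ∀ i, (Θ (y i) : V) ∈ ℝ ∙ (y i₀ : V) := fun i ↦ by
    by_cases hi : i = i₀
    · rw [hi, hΘ₀]
      exact Submodule.mem_span_singleton_self _
    · rw [hall i hi, hΘj, coe_neg_sphere]
      exact neg_mem (Submodule.mem_span_singleton_self _)
  refine exists_isFiberJoiningHomotopy_of_homeomorph hinj hE hΦ hR hΦR Θ (fun s ↦ ?_)
    (Or.inr fun i k hik ↦ ?_)
  · have hle : pairSpan (fun i ↦ (Θ (y i) : V)) s ≤ ℝ ∙ (y i₀ : V) :=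
      Submodule.span_le.2 (pair_subset (hmem _) (hmem _))
    have hline : finrank ℝ (ℝ ∙ (y i₀ : V)) ≤ 1 := by
      simpa using finrank_span_le_card (R := ℝ) {(y i₀ : V)}
    exact (Nat.add_le_add_right ((Submodule.finrank_mono hle).trans hline) 2).trans hV
  · by_contra! hne
    exact hik ((hall i hne.1).trans (hall k hne.2).symm)

end FiberJoiningSphere

section Lifting

variable {E X Y : Type*} [TopologicalSpace E] [TopologicalSpace X] [TopologicalSpace Y]

lemma exists_lift_of_simplyConnected_cover {q : C(E, Y)} (hq : IsCoveringMap q)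
    (hq' : Function.Surjective q) {ι : Type*} {S : ι → Set X} (hS : ∀ i, IsOpen (S i))
    (hScover : ∀ x, ∃ i, x ∈ S i) [∀ i, SimplyConnectedSpace (S i)]
    [∀ i, LocallyPathConnectedSpace (S i)] (hSS : ∀ i j, IsPreconnected (S i ∩ S j))
    {x₀ : X} (hx₀ : ∀ i, x₀ ∈ S i) (f : C(X, Y)) : ∃ F : C(X, E), q.comp F = f := by
  obtain ⟨e₀, he₀⟩ := hq' (f x₀)
  choose F hF using fun i ↦
    (hq.existsUnique_continuousMap_lifts (f.restrict (S i)) ⟨x₀, hx₀ i⟩ e₀ he₀).exists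
  have hqF (i) (x : S i) : q (F i x) = f x := congrFun (hF i).2 x
  have agree (i j) (x) (hi : x ∈ S i) (hj : x ∈ S j) : F i ⟨x, hi⟩ = F j ⟨x, hj⟩ := by
    have := isPreconnected_iff_preconnectedSpace.1 (hSS i j)
    let Fi : ↥(S i ∩ S j) → E := fun x ↦ F i ⟨x, x.2.1⟩
    let Fj : ↥(S i ∩ S j) → E := fun x ↦ F j ⟨x, x.2.2⟩
    have h : Fi = Fj := hq.eq_of_comp_eq (by fun_prop) (by fun_prop)
      (funext fun x ↦ (hqF i ⟨x, x.2.1⟩).trans (hqF j ⟨x, x.2.2⟩).symm) ⟨x₀, hx₀ i, hx₀ j⟩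
      ((hF i).1.trans (hF j).1.symm)
    exact congrFun h ⟨x, hi, hj⟩
  have hSnhds (x) : ∃ i, S i ∈ 𝓝 x := (hScover x).imp fun i hi ↦ (hS i).mem_nhds hi
  refine ⟨ContinuousMap.liftCover S F agree hSnhds, ContinuousMap.ext fun x ↦ ?_⟩
  obtain ⟨i, hi⟩ := hScover x
  exact (congrArg q (ContinuousMap.liftCover_coe (⟨x, hi⟩ : S i))).trans (hqF i ⟨x, hi⟩)

end Lifting

section HomotopyExtension

variable {X Y : Type*} [TopologicalSpace X] [TopologicalSpace Y]

lemma homotopic_of_contractibleSpace [ContractibleSpace X] [PathConnectedSpace Y] (f g : C(X, Y)) :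
    f.Homotopic g := by
  obtain ⟨x, hx⟩ := id_nullhomotopic X
  have hconst : ∀ k : C(X, Y), k.Homotopic (.const X (k x)) := fun k ↦
    (ContinuousMap.Homotopic.refl k).comp hx
  exact ((hconst f).trans ⟨(PathConnectedSpace.somePath (f x) (g x)).toHomotopyConst⟩).trans
    (hconst g).symm

lemma exists_homotopic_eq_of_le {h : X → ℝ} (hh : Continuous h) {c' c : ℝ} (hc : c' < c)
    {U : Set X} (hU : ∀ x, c' ≤ h x → x ∈ U) {f φ : C(X, Y)}
    (hfφ : (f.restrict U).Homotopic (φ.restrict U)) :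
    ∃ f' : C(X, Y), f.Homotopic f' ∧ ∀ x, c ≤ h x → f' x = φ x := by
  classical
  obtain ⟨K⟩ := hfφ
  let K' : unitInterval × X → Y := fun z ↦ if hz : z.2 ∈ U then K (z.1, ⟨z.2, hz⟩) else f z.2
  have hK'U : ∀ t x (hx : x ∈ U), K' (t, x) = K (t, ⟨x, hx⟩) := fun t x hx ↦ dif_pos hx
  have hK' : ContinuousOn K' {z | z.2 ∈ U} := by
    rw [continuousOn_iff_continuous_domRestrict]
    exact (K.continuous.comp ((continuous_fst.comp continuous_subtype_val).prodMk
      ((continuous_snd.comp continuous_subtype_val).subtype_mk fun z ↦ z.2))).congr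
        fun z ↦ (hK'U _ _ z.2).symm
  let μ : X → unitInterval := fun x ↦ projIcc 0 1 zero_le_one ((h x - c') / (c - c'))
  have hμ : Continuous μ := continuous_projIcc.comp (by fun_prop)
  have hμ_bot : ∀ x, h x ≤ c' → μ x = 0 := fun x hx ↦ projIcc_of_le_left _
    (div_nonpos_of_nonpos_of_nonneg (sub_nonpos.2 hx) (sub_pos.2 hc).le)
  have hμ_top : ∀ x, c ≤ h x → μ x = 1 := fun x hx ↦ projIcc_of_right_le _
    ((one_le_div (sub_pos.2 hc)).2 (sub_le_sub_right hx c'))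
  let L : unitInterval × X → Y := fun z ↦ if c' ≤ h z.2 then K' (z.1 * μ z.2, z.2) else f z.2
  have hK'0 : ∀ x, c' ≤ h x → K' (0, x) = f x := fun x hx ↦
    (hK'U 0 x (hU x hx)).trans (K.map_zero_left _)
  have hL : Continuous L := by
    refine continuous_if_le continuous_const (hh.comp continuous_snd)
      (hK'.comp (by fun_prop) fun z hz ↦ hU _ hz) (by fun_prop) fun z hz ↦ ?_
    rw [hμ_bot _ hz.ge, mul_zero, hK'0 _ hz.le]
  have hL0 : ∀ x, L (0, x) = f x := fun x ↦ by
    by_cases hx : c' ≤ h x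
    · exact (if_pos hx).trans ((congrArg (fun t ↦ K' (t, x)) (zero_mul _)).trans (hK'0 x hx))
    · exact if_neg hx
  refine ⟨⟨fun x ↦ L (1, x), by fun_prop⟩, ⟨⟨⟨L, hL⟩, hL0, fun x ↦ rfl⟩⟩, fun x hx ↦ ?_⟩
  have hx' : c' ≤ h x := hc.le.trans hx
  change (if c' ≤ h x then K' (1 * μ x, x) else f x) = φ x
  rw [if_pos hx', hμ_top x hx, mul_one, hK'U 1 x (hU x hx')]
  exact K.map_one_left _

end HomotopyExtension

section Sphere

variable {m : ℕ}

local instance : Fact (finrank ℝ (EuclideanSpace ℝ (Fin (m + 1))) = m + 1) :=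
  ⟨finrank_euclideanSpace_fin⟩

/-- The stereographic projection from `N`, as a homeomorphism. -/
noncomputable def punctureHomeomorph (N : Sph m) :
    ({N}ᶜ : Set (Sph m)) ≃ₜ EuclideanSpace ℝ (Fin m) :=
  (Homeomorph.setCongr (stereographic'_source (n := m) N).symm).trans
    ((stereographic' m N).toHomeomorphSourceTarget.trans
      ((Homeomorph.setCongr (stereographic'_target (n := m) N)).trans (Homeomorph.Set.univ _)))

instance (N : Sph m) : ContractibleSpace ({N}ᶜ : Set (Sph m)) :=
  (punctureHomeomorph N).contractibleSpace

instance (N : Sph m) : LocallyPathConnectedSpace ({N}ᶜ : Set (Sph m)) :=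
  (punctureHomeomorph N).isOpenEmbedding.locallyPathConnectedSpace

/-- The height above the equator of the points of the sphere with stereographic coordinates of
norm `r`. -/
noncomputable def stereographicHeight (r : ℝ) : ℝ := (r ^ 2 - 4) / (r ^ 2 + 4)

lemma stereographicHeight_lt_inner_self (N : Sph m) (r : ℝ) :
    stereographicHeight r < inner ℝ (N : EuclideanSpace ℝ (Fin (m + 1))) N := by
  rw [real_inner_self_eq_norm_sq, norm_eq_of_mem_sphere, one_pow, stereographicHeight,
    div_lt_one (by positivity)]
  linarith

lemma strictMonoOn_stereographicHeight : StrictMonoOn stereographicHeight (Ici 0) := by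
  intro r (hr : 0 ≤ r) s (hs : 0 ≤ s) hrs
  have hsq : r ^ 2 < s ^ 2 := (sq_lt_sq₀ hr hs).2 hrs
  rw [stereographicHeight, stereographicHeight, div_lt_div_iff₀ (by positivity) (by positivity)]
  linarith

lemma inner_stereographic'_symm (N : Sph m) (x : EuclideanSpace ℝ (Fin m)) :
    inner ℝ (N : EuclideanSpace ℝ (Fin (m + 1))) ((stereographic' m N).symm x : Sph m) =
      stereographicHeight ‖x‖ := by
  let U := (OrthonormalBasis.fromOrthogonalSpanSingleton (𝕜 := ℝ) m
    (ne_zero_of_mem_unit_sphere N)).repr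
  have horth : inner ℝ (N : EuclideanSpace ℝ (Fin (m + 1))) (U.symm x) = 0 :=
    Submodule.mem_orthogonal_singleton_iff_inner_right.1 (U.symm x).2
  have hnorm : ‖(U.symm x : EuclideanSpace ℝ (Fin (m + 1)))‖ = ‖x‖ := U.symm.norm_map x
  rw [stereographic'_symm_apply]
  change inner ℝ (N : EuclideanSpace ℝ (Fin (m + 1)))
    ((‖(U.symm x : EuclideanSpace ℝ (Fin (m + 1)))‖ ^ 2 + 4)⁻¹ • (4 : ℝ) • (U.symm x : _) +
      (‖(U.symm x : EuclideanSpace ℝ (Fin (m + 1)))‖ ^ 2 + 4)⁻¹ •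
        (‖(U.symm x : EuclideanSpace ℝ (Fin (m + 1)))‖ ^ 2 - 4) • N.val) = _
  rw [hnorm, inner_add_right, inner_smul_right, inner_smul_right, inner_smul_right,
    inner_smul_right, horth, real_inner_self_eq_norm_sq, norm_eq_of_mem_sphere,
    stereographicHeight]
  ring

lemma continuous_stereographic'_symm (N : Sph m) : Continuous (stereographic' m N).symm := by
  have h := (stereographic' m N).continuousOn_symm
  rwa [stereographic'_target, continuousOn_univ] at h

lemma stereographic'_apply_symm (N : Sph m) (x : EuclideanSpace ℝ (Fin m)) :
    stereographic' m N ((stereographic' m N).symm x) = x :=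
  (stereographic' m N).right_inv ((stereographic'_target (n := m) N).symm ▸ mem_univ x)

lemma eq_or_exists_stereographic'_symm_eq (N p : Sph m) :
    p = N ∨ ∃ x, (stereographic' m N).symm x = p :=
  or_iff_not_imp_left.2 fun hp ↦ ⟨stereographic' m N p,
    (stereographic' m N).left_inv ((stereographic'_source (n := m) N).symm ▸ hp)⟩

lemma exists_homotopic_of_homotopy_ball {Y : Type*} [TopologicalSpace Y] (N : Sph m) {r : ℝ}
    (hr : 0 ≤ r) (f : C(Sph m, Y)) {H : unitInterval × EuclideanSpace ℝ (Fin m) → Y}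
    (hH : Continuous H) (hH0 : ∀ x, ‖x‖ ≤ r → H (0, x) = f ((stereographic' m N).symm x))
    (hHr : ∀ t x, ‖x‖ = r → H (t, x) = f ((stereographic' m N).symm x)) :
    ∃ f' : C(Sph m, Y), f.Homotopic f' ∧ f' N = f N ∧
      (∀ x, ‖x‖ ≤ r → f' ((stereographic' m N).symm x) = H (1, x)) ∧
      ∀ x, r < ‖x‖ → f' ((stereographic' m N).symm x) = f ((stereographic' m N).symm x) := by
  let e := stereographic' m N
  let h : Sph m → ℝ := fun p ↦ inner ℝ (N : EuclideanSpace ℝ (Fin (m + 1))) p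
  have hh : Continuous h := by fun_prop
  let c : ℝ := stereographicHeight r
  have hhe : ∀ x, h (e.symm x) = stereographicHeight ‖x‖ := inner_stereographic'_symm N
  have hc : ∀ x, h (e.symm x) ≤ c ↔ ‖x‖ ≤ r := fun x ↦ by
    rw [hhe, strictMonoOn_stereographicHeight.le_iff_le (norm_nonneg x) hr]
  have hN : c < h N := stereographicHeight_lt_inner_self N r
  have he : ContinuousOn e {p | h p ≤ c} := e.continuousOn.mono fun p hp ↦
    (stereographic'_source (n := m) N).symm ▸ fun hpN ↦ (hpN ▸ hp : h N ≤ c).not_gt hN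
  let K : unitInterval × Sph m → Y := fun z ↦ if h z.2 ≤ c then H (z.1, e z.2) else f z.2
  have hKball : ∀ t x, ‖x‖ ≤ r → K (t, e.symm x) = H (t, x) := fun t x hx ↦ by
    simp only [K]
    rw [if_pos ((hc x).2 hx), stereographic'_apply_symm]
  have hKcompl : ∀ t p, c < h p → K (t, p) = f p := fun t p hp ↦ if_neg hp.not_ge
  have hK : Continuous K := by
    refine continuous_if_le (hh.comp continuous_snd) continuous_const
      (hH.comp_continuousOn (continuousOn_fst.prodMk
        (he.comp continuousOn_snd fun z hz ↦ hz))) (by fun_prop) fun ⟨t, p⟩ hp ↦ ?_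
    obtain rfl | ⟨x, rfl⟩ := eq_or_exists_stereographic'_symm_eq N p
    · exact absurd hp hN.ne'
    · simp only [e, stereographic'_apply_symm]
      exact hHr t x (strictMonoOn_stereographicHeight.injOn (norm_nonneg x) hr
        ((hhe x).symm.trans hp))
  have hK0 : ∀ p, K (0, p) = f p := fun p ↦ by
    rcases le_or_gt (h p) c with hp | hp
    · obtain rfl | ⟨x, rfl⟩ := eq_or_exists_stereographic'_symm_eq N p
      · exact absurd hp hN.not_ge
      · exact (hKball 0 x ((hc x).1 hp)).trans (hH0 x ((hc x).1 hp))
    · exact hKcompl 0 p hp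
  exact ⟨⟨fun p ↦ K (1, p), by fun_prop⟩, ⟨⟨⟨K, hK⟩, hK0, fun p ↦ rfl⟩⟩, hKcompl 1 N hN,
    hKball 1, fun x hx ↦ hKcompl 1 _ (not_le.1 ((hc x).not.2 hx.not_ge))⟩

lemma isPathConnected_openHemisphere {V : Type*} [NormedAddCommGroup V] [InnerProductSpace ℝ V]
    (N : sphere (0 : V) 1) : IsPathConnected {p : sphere (0 : V) 1 | 0 < inner ℝ (N : V) p} := by
  let S : Set V := {v | 0 < inner ℝ (N : V) v}
  have hS : IsPathConnected S := by
    refine (convex_halfSpace_gt (innerₛₗ ℝ (N : V)).isLinear 0).isPathConnected ⟨N, ?_⟩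
    simp
  have hS0 : ∀ v ∈ S, 0 < ‖v‖ := fun v hv ↦ norm_pos_iff.2 fun h ↦ by simp [S, h] at hv
  have himage : (fun v : V ↦ ‖v‖⁻¹ • v) '' S = Subtype.val '' {p : sphere (0 : V) 1 |
      0 < inner ℝ (N : V) p} := by
    refine Subset.antisymm ?_ ?_
    · rintro _ ⟨v, hv, rfl⟩
      have hv1 : ‖v‖⁻¹ • v ∈ sphere (0 : V) 1 := by
        rw [mem_sphere_zero_iff_norm, norm_smul, norm_inv, norm_norm,
          inv_mul_cancel₀ (hS0 v hv).ne']
      refine ⟨⟨_, hv1⟩, ?_, rfl⟩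
      rw [mem_ofPred_eq, inner_smul_right]
      exact mul_pos (inv_pos.2 (hS0 v hv)) hv
    · rintro _ ⟨p, hp, rfl⟩
      exact ⟨p, hp, by simp⟩
  rw [IsInducing.subtypeVal.isPathConnected_iff, ← himage]
  exact hS.image' ((continuous_norm.continuousOn.inv₀ fun v hv ↦ (hS0 v hv).ne').smul
    continuousOn_id)

section SphereFibers

variable {N : Sph m}

lemma isPrepathConnected_image_stereographic'_symm {s : Set (EuclideanSpace ℝ (Fin m))}
    (hs : IsPrepathConnected s) : IsPrepathConnected ((stereographic' m N).symm '' s) := by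
  rintro _ ⟨x, hx, rfl⟩ _ ⟨y, hy, rfl⟩
  exact (hs x hx y hy).map (continuous_stereographic'_symm N)

lemma stereographicHeight_two : stereographicHeight 2 = 0 := by
  norm_num [stereographicHeight]

lemma isPrepathConnected_insert_image_stereographic'_symm (hm : m ≠ 0)
    {s : Set (EuclideanSpace ℝ (Fin m))} (hs : IsPrepathConnected s)
    (hs2 : ∀ x, 2 ≤ ‖x‖ → x ∈ s) :
    IsPrepathConnected (insert N ((stereographic' m N).symm '' s)) := by
  have : Nonempty (Fin m) := Fin.pos_iff_nonempty.1 (Nat.pos_of_ne_zero hm)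
  obtain ⟨x₀, hx₀⟩ := NormedSpace.exists_lt_norm ℝ (EuclideanSpace ℝ (Fin m)) 2
  have hemisphere_subset : {p : Sph m | 0 < inner ℝ (N : EuclideanSpace ℝ (Fin (m + 1))) p} ⊆
      insert N ((stereographic' m N).symm '' s) := by
    intro p hp
    obtain rfl | ⟨x, rfl⟩ := eq_or_exists_stereographic'_symm_eq N p
    · exact mem_insert _ _
    · rw [mem_ofPred_eq, inner_stereographic'_symm, ← stereographicHeight_two,
        strictMonoOn_stereographicHeight.lt_iff_lt (by simp) (norm_nonneg x)] at hp
      exact mem_insert_of_mem _ ⟨x, hs2 x hp.le, rfl⟩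
  have hx₀_mem : (stereographic' m N).symm x₀ ∈
      {p : Sph m | 0 < inner ℝ (N : EuclideanSpace ℝ (Fin (m + 1))) p} := by
    rw [mem_ofPred_eq, inner_stereographic'_symm, ← stereographicHeight_two]
    exact strictMonoOn_stereographicHeight (by simp) (norm_nonneg x₀) hx₀
  have hN_mem : N ∈ {p : Sph m | 0 < inner ℝ (N : EuclideanSpace ℝ (Fin (m + 1))) p} := by
    rw [mem_ofPred_eq, real_inner_self_eq_norm_sq, norm_eq_of_mem_sphere]
    norm_num
  refine .of_hub (t := {(stereographic' m N).symm x₀}) ?_ ?_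
  · rintro _ rfl _ rfl
    exact JoinedIn.refl (hemisphere_subset hx₀_mem)
  · rintro _ (rfl | hp)
    · exact ⟨_, rfl, ((isPathConnected_openHemisphere _).joinedIn _ hN_mem _ hx₀_mem).mono
        hemisphere_subset⟩
    · exact ⟨_, rfl, (isPrepathConnected_image_stereographic'_symm hs _ hp _
        ⟨x₀, hs2 x₀ hx₀.le, rfl⟩).mono (subset_insert _ _)⟩

lemma isPrepathConnected_of_preimage_stereographic'_symm (hm : m ≠ 0) {s : Set (Sph m)}
    (hs : IsPrepathConnected ((stereographic' m N).symm ⁻¹' s))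
    (hN : N ∈ s → ∀ x, 2 ≤ ‖x‖ → (stereographic' m N).symm x ∈ s) : IsPrepathConnected s := by
  by_cases hNs : N ∈ s
  · convert isPrepathConnected_insert_image_stereographic'_symm (N := N) hm hs (hN hNs)
    ext p
    obtain hp | ⟨x, rfl⟩ := eq_or_exists_stereographic'_symm_eq N p
    · simp only [hp, hNs, mem_insert_iff, true_or]
    · refine ⟨fun hx ↦ .inr ⟨x, hx, rfl⟩, ?_⟩
      rintro (hx | hx)
      · rwa [hx]
      · exact image_preimage_subset _ _ hx
  · convert isPrepathConnected_image_stereographic'_symm hs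
    refine (image_preimage_eq_of_subset fun p hp ↦ ?_).symm
    exact (eq_or_exists_stereographic'_symm_eq N p).resolve_left fun h ↦ hNs (h ▸ hp)

variable {Y : Type*} [TopologicalSpace Y]

lemma exists_homotopic_pair_eq [PathConnectedSpace Y] (f₁ f₂ : C(Sph m, Y)) (N : Sph m) (a : Y) :
    ∃ f₁' f₂' : C(Sph m, Y), f₁.Homotopic f₁' ∧ f₂.Homotopic f₂' ∧
      (∀ x, ‖x‖ ≤ 3 → f₂' ((stereographic' m N).symm x) = a) ∧
      (∀ x, 2 ≤ ‖x‖ → f₁' ((stereographic' m N).symm x) = f₂' ((stereographic' m N).symm x)) ∧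
      f₁' N = f₂' N := by
  let h : Sph m → ℝ := fun p ↦ inner ℝ (N : EuclideanSpace ℝ (Fin (m + 1))) p
  have hh : Continuous h := by fun_prop
  have hN : h N = 1 := by
    simp only [h, real_inner_self_eq_norm_sq, norm_eq_of_mem_sphere, one_pow]
  have hN' : h (-N) = -1 := by
    simp only [← hN, h, coe_neg_sphere, inner_neg_right]
  obtain ⟨f₂', hf₂, hf₂a⟩ := exists_homotopic_eq_of_le (f := f₂) (φ := .const _ a)
    (U := {N}ᶜ) hh.neg (c' := -3 / 4) (c := -1 / 2) (by norm_num) (by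
      rintro _ hp rfl
      norm_num [hN] at hp) (homotopic_of_contractibleSpace _ _)
  obtain ⟨f₁', hf₁, hf₁₂⟩ := exists_homotopic_eq_of_le (f := f₁) (φ := f₂')
    (U := {-N}ᶜ) hh (c' := -1 / 2) (c := 0) (by norm_num) (by
      rintro _ hp rfl
      norm_num [hN'] at hp) (homotopic_of_contractibleSpace _ _)
  have hheight {r s : ℝ} (hr : 0 ≤ r) (hrs : r ≤ s) :
      stereographicHeight r ≤ stereographicHeight s :=
    strictMonoOn_stereographicHeight.monotoneOn hr (hr.trans hrs) hrs
  have hhx (x) : h ((stereographic' m N).symm x) = stereographicHeight ‖x‖ :=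
    inner_stereographic'_symm N x
  refine ⟨f₁', f₂', hf₁, hf₂, fun x hx ↦ hf₂a _ ?_, fun x hx ↦ hf₁₂ _ ?_,
    hf₁₂ N real_inner_self_nonneg⟩
  · rw [neg_div, Pi.neg_apply, neg_le_neg_iff, hhx]
    exact (hheight (norm_nonneg x) hx).trans (by norm_num [stereographicHeight])
  · rw [hhx, ← stereographicHeight_two]
    exact hheight zero_le_two hx

variable {G : Type*} [Group G] [MulAction G Y] [IsCancelSMul G Y]

lemma exists_homotopic_forall_isPrepathConnected (hm : m ≠ 0) {a : Y}
    {f₁ f₂ : C(Sph m, Y)}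
    (hf₂ : ∀ x, ‖x‖ ≤ 3 → f₂ ((stereographic' m N).symm x) = a)
    (hf₁₂ : ∀ x, 2 ≤ ‖x‖ →
      f₁ ((stereographic' m N).symm x) = f₂ ((stereographic' m N).symm x))
    (hf₁₂N : f₁ N = f₂ N)
    (hjoin : ∀ Φ : EuclideanSpace ℝ (Fin m) → Y, Continuous Φ → (∀ x, 2 ≤ ‖x‖ → Φ x = a) →
      ∃ H, IsFiberJoiningHomotopy H Φ (fun g : G ↦ g • a) 1 2) :
    ∃ f₁' : C(Sph m, Y), f₁.Homotopic f₁' ∧ ∀ g : G, IsPrepathConnected {p | f₁' p = g • f₂ p} := by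
  let σ : EuclideanSpace ℝ (Fin m) → Sph m := (stereographic' m N).symm
  have hσ : Continuous σ := continuous_stereographic'_symm N
  obtain ⟨H, hH⟩ := hjoin (fun x ↦ if ‖x‖ ≤ 2 then f₁ (σ x) else a)
    (continuous_if_le continuous_norm continuous_const (by fun_prop) (by fun_prop) fun x hx ↦ by
      rw [hf₁₂ x hx.ge, hf₂ x (by linarith)])
    (fun x hx ↦ by
      split_ifs with h
      · rw [hf₁₂ x hx, hf₂ x (by linarith)]
      · rfl)
  have hHr (t) (x) (hx : 3 ≤ ‖x‖) : H (t, x) = a := by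
    simpa only [one_smul] using hH.eq_of_add_one_le t x (by linarith)
  obtain ⟨f₁', hf₁, hf₁N, hf₁le, hf₁lt⟩ := exists_homotopic_of_homotopy_ball N zero_le_three f₁
    hH.continuous (fun x hx ↦ by
      rw [hH.map_zero]
      split_ifs with h
      · rfl
      · exact (hf₂ x hx).symm.trans (hf₁₂ x (le_of_not_ge h)).symm)
    (fun t x hx ↦ by
      rw [hHr t x hx.ge, ← hf₂ x hx.le]
      exact (hf₁₂ x (by linarith)).symm)
  have eq_smul_self_iff (g : G) (y : Y) : y = g • y ↔ g = 1 :=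
    ⟨fun h ↦ IsCancelSMul.eq_one_of_smul h.symm, by rintro rfl; exact (one_smul G y).symm⟩
  have hfiberN (g : G) : f₁' N = g • f₂ N ↔ g = 1 := by
    rw [hf₁N, hf₁₂N, eq_smul_self_iff]
  have hfiber (g : G) (x) : f₁' (σ x) = g • f₂ (σ x) ↔ H (1, x) = g • a := by
    obtain hx | hx := le_or_gt ‖x‖ 3
    · rw [hf₁le x hx, hf₂ x hx]
    · rw [hf₁lt x hx, hf₁₂ x (by linarith), hHr 1 x hx.le, eq_smul_self_iff, eq_smul_self_iff]
  refine ⟨f₁', hf₁, fun g ↦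
    isPrepathConnected_of_preimage_stereographic'_symm (N := N) hm ?_ ?_⟩
  · simpa only [preimage_ofPred_eq, ← hfiber] using hH.isPrepathConnected g
  · intro hg x hx
    rw [(hfiberN g).1 hg]
    exact (hfiber 1 x).2 (hH.eq_of_le x hx)

end SphereFibers

section LiftingSphere

lemma stereographic'_symm_ne (N : Sph m) (x : EuclideanSpace ℝ (Fin m)) :
    (stereographic' m N).symm x ≠ N := by
  intro h
  have := stereographicHeight_lt_inner_self N ‖x‖
  rw [← inner_stereographic'_symm, h] at this
  exact this.false

lemma isConnected_compl_inter_compl (hm : 2 ≤ m) (N M : Sph m) :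
    IsConnected ({N}ᶜ ∩ {M}ᶜ : Set (Sph m)) := by
  obtain rfl | ⟨x, rfl⟩ := eq_or_exists_stereographic'_symm_eq N M
  · rw [inter_self]
    exact isConnected_iff_connectedSpace.2 inferInstance
  · have hrank : 1 < Module.rank ℝ (EuclideanSpace ℝ (Fin m)) := by
      rw [← finrank_eq_rank, finrank_euclideanSpace_fin]
      exact_mod_cast hm
    convert (isConnected_compl_singleton_of_one_lt_rank hrank x).image _
      (continuous_stereographic'_symm N).continuousOn
    ext p
    obtain rfl | ⟨y, rfl⟩ := eq_or_exists_stereographic'_symm_eq N p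
    · simp [stereographic'_symm_ne]
    · have hinj : Function.Injective (stereographic' m N).symm :=
        Function.LeftInverse.injective (stereographic'_apply_symm N)
      simp [stereographic'_symm_ne, hinj.eq_iff]

lemma exists_lift_sphere {E Y : Type*} [TopologicalSpace E] [TopologicalSpace Y] (hm : 2 ≤ m)
    {q : C(E, Y)} (hq : IsCoveringMap q) (hq' : Function.Surjective q) (f : C(Sph m, Y)) :
    ∃ F : C(Sph m, E), q.comp F = f := by
  obtain ⟨x₀⟩ : Nonempty (Sph m) := (NormedSpace.sphere_nonempty.2 zero_le_one).to_subtype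
  refine exists_lift_of_simplyConnected_cover hq hq' (ι := ({x₀}ᶜ : Set (Sph m)))
    (S := fun N ↦ {(N : Sph m)}ᶜ) (fun N ↦ isOpen_compl_singleton) (fun x ↦ ?_)
    (fun N M ↦ (isConnected_compl_inter_compl hm _ _).isPreconnected)
    (fun N ↦ Ne.symm N.2) f
  obtain ⟨N, hNx₀, hNx⟩ := (isConnected_compl_inter_compl hm x₀ x).nonempty
  exact ⟨⟨N, hNx₀⟩, Ne.symm hNx⟩

end LiftingSphere

end Sphere

section Antipodal

variable {X V : Type*} [TopologicalSpace X] [NormedAddCommGroup V] [NormedSpace ℝ V]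

lemma homotopic_of_forall_ne_neg (u v : C(X, sphere (0 : V) 1)) (huv : ∀ x, u x ≠ -v x) :
    u.Homotopic v := by
  have segment_ne_zero (x) (t : ℝ) (ht : t ∈ Icc (0 : ℝ) 1) :
      (u x : V) + t • ((v x : V) - u x) ≠ 0 := by
    intro h
    have h' : (1 - t) • (u x : V) = -(t • (v x : V)) := by
      rw [← add_eq_zero_iff_eq_neg]
      convert h using 1
      module
    have ht' : 1 - t = t := by
      simpa only [norm_neg, norm_smul, norm_eq_of_mem_sphere, mul_one, Real.norm_eq_abs,
        abs_of_nonneg ht.1, abs_of_nonneg (sub_nonneg.2 ht.2)] using congrArg norm h'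
    have ht0 : t ≠ 0 := by
      rintro rfl
      norm_num at ht'
    rw [ht', ← smul_neg] at h'
    exact huv x (Subtype.ext (smul_right_injective V ht0 h'))
  obtain ⟨H, hH, hH1, hHu, hHv, -⟩ := exists_unit_homotopy (Φ := fun x ↦ (u x : V))
    (ψ := fun x ↦ (v x : V)) (θ := 0) (by fun_prop) (by fun_prop) continuous_zero
    (fun x ↦ norm_eq_of_mem_sphere _) segment_ne_zero
    (fun x t _ ↦ by simpa using ne_zero_of_mem_unit_sphere (v x))
  exact ⟨⟨⟨fun z ↦ ⟨H z, mem_sphere_zero_iff_norm.2 (hH1 z)⟩, by fun_prop⟩,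
    fun x ↦ Subtype.ext (hHu x), fun x ↦ Subtype.ext (by simp [hHv])⟩⟩

end Antipodal

section Coincidences

variable {G E X : Type*} [Group G] [TopologicalSpace E] [MulAction G E] [TopologicalSpace X]

variable (G E) in
/-- The projection of a `G`-space onto its orbit space. -/
def orbitMap : C(E, Quotient (MulAction.orbitRel G E)) := ⟨Quotient.mk _, continuous_quotient_mk'⟩

lemma orbitMap_eq_iff {x y : E} : orbitMap G E x = orbitMap G E y ↔ ∃ g : G, x = g • y := by
  have h : orbitMap G E x = orbitMap G E y ↔ x ∈ MulAction.orbit G y := by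
    rw [← MulAction.orbitRel_apply]
    exact Quotient.eq
  simp only [h, MulAction.mem_orbit_iff, eq_comm]

lemma orbitMap_smul (g : G) (x : E) : orbitMap G E (g • x) = orbitMap G E x :=
  orbitMap_eq_iff.2 ⟨g, rfl⟩

lemma isCoveringMap_orbitMap [Finite G] [ContinuousConstSMul G E] [IsCancelSMul G E] [T2Space E]
    [LocallyCompactSpace E] : IsCoveringMap (orbitMap G E) :=
  (isQuotientCoveringMap_quotientMk_of_properlyDiscontinuousSMul (G := G) (E := E)).isCoveringMap

/-- The coincidence set of the maps into the orbit space induced by `F₁` and `F₂`. -/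
abbrev OrbitCoincidence (G : Type*) [Group G] [MulAction G E] (F₁ F₂ : C(X, E)) : Type _ :=
  {x : X // (orbitMap G E).comp F₁ x = (orbitMap G E).comp F₂ x}

variable {F₁ F₂ : C(X, E)}

section Label

variable [ContinuousConstSMul G E] (hq : IsCoveringMap (orbitMap G E))

include hq in
lemma eq_smul_of_joined {x y : OrbitCoincidence G F₁ F₂} (hxy : Joined x y) {g : G}
    (hx : F₁ x = g • F₂ x) : F₁ y = g • F₂ y := by
  obtain ⟨γ⟩ := hxy
  let Γ₁ : unitInterval → E := fun t ↦ F₁ (γ t)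
  let Γ₂ : unitInterval → E := fun t ↦ g • F₂ (γ t)
  have h : Γ₁ = Γ₂ := by
    refine hq.eq_of_comp_eq (by fun_prop) (by fun_prop) (funext fun t ↦ ?_) 0 ?_
    · exact (γ t).2.trans (orbitMap_smul g _).symm
    · simpa only [Γ₁, Γ₂, γ.source] using hx
  simpa only [Γ₁, Γ₂, γ.target] using congrFun h 1

include hq in
lemma exists_label [IsCancelSMul G E] (F₁ F₂ : C(X, E)) :
    ∃ ℓ : ZerothHomotopy (OrbitCoincidence G F₁ F₂) → G,
      ∀ x : OrbitCoincidence G F₁ F₂, F₁ x = ℓ (Quotient.mk _ x) • F₂ x := by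
  choose ℓ hℓ using fun x : OrbitCoincidence G F₁ F₂ ↦ orbitMap_eq_iff.1 x.2
  exact ⟨Quotient.lift ℓ fun x y hxy ↦ IsCancelSMul.right_cancel _ _ (F₂ y)
    ((eq_smul_of_joined hq hxy (hℓ x)).symm.trans (hℓ y)), hℓ⟩

include hq in
lemma card_le_card_zerothHomotopy [IsCancelSMul G E] (hne : ∀ g : G, ∃ x, F₁ x = g • F₂ x) :
    ENat.card G ≤ ENat.card (ZerothHomotopy (OrbitCoincidence G F₁ F₂)) := by
  obtain ⟨ℓ, hℓ⟩ := exists_label (G := G) hq F₁ F₂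
  have surjective_ℓ : Function.Surjective ℓ := fun g ↦ by
    obtain ⟨x, hx⟩ := hne g
    exact ⟨Quotient.mk _ ⟨x, orbitMap_eq_iff.2 ⟨g, hx⟩⟩,
      IsCancelSMul.right_cancel _ _ (F₂ x) ((hℓ _).symm.trans hx)⟩
  exact ENat.card_le_card_of_injective (Function.injective_surjInv surjective_ℓ)

include hq in
lemma card_zerothHomotopy_le_card [IsCancelSMul G E]
    (hpc : ∀ g : G, IsPrepathConnected {x | F₁ x = g • F₂ x}) :
    ENat.card (ZerothHomotopy (OrbitCoincidence G F₁ F₂)) ≤ ENat.card G := by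
  obtain ⟨ℓ, hℓ⟩ := exists_label (G := G) hq F₁ F₂
  refine ENat.card_le_card_of_injective (f := ℓ) fun z z' ↦ Quotient.inductionOn₂ z z' ?_
  intro x y hxy
  obtain ⟨γ, hγ⟩ := hpc _ x (hℓ x) y ((hℓ y).trans (by rw [hxy]))
  exact Quotient.sound ⟨⟨⟨fun t ↦ ⟨γ t, orbitMap_eq_iff.2 ⟨_, hγ t⟩⟩, by fun_prop⟩,
    Subtype.ext γ.source, Subtype.ext γ.target⟩⟩

end Label

end Coincidences

section FreeActionOnSphere

variable {G X V : Type*} [Group G] [TopologicalSpace X] [NormedAddCommGroup V] [NormedSpace ℝ V]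
  [MulAction G (sphere (0 : V) 1)] [ContinuousConstSMul G (sphere (0 : V) 1)]
  [IsCancelSMul G (sphere (0 : V) 1)]

lemma exists_eq_smul_of_not_homotopic [Nontrivial G] {F₁ F₂ : C(X, sphere (0 : V) 1)}
    (h : ¬ ((orbitMap G (sphere (0 : V) 1)).comp F₁).Homotopic ((orbitMap G _).comp F₂)) (g : G) :
    ∃ x, F₁ x = g • F₂ x := by
  contrapose! h
  obtain ⟨k, hk⟩ := exists_ne (1 : G)
  let A : C(X, sphere (0 : V) 1) := ⟨fun x ↦ -(g • F₂ x), by fun_prop⟩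
  let B : C(X, sphere (0 : V) 1) := ⟨fun x ↦ k • g • F₂ x, by fun_prop⟩
  have hA : F₁.Homotopic A := homotopic_of_forall_ne_neg _ _ fun x hx ↦
    h x (hx.trans (neg_neg _))
  have hB : A.Homotopic B := homotopic_of_forall_ne_neg _ _ fun x hx ↦
    hk (IsCancelSMul.eq_one_of_smul (neg_injective hx).symm)
  have hBF₂ : (orbitMap G _).comp B = (orbitMap G _).comp F₂ := ContinuousMap.ext fun x ↦
    (orbitMap_smul k _).trans (orbitMap_smul g _)
  rw [← hBF₂]
  exact (ContinuousMap.Homotopic.refl _).comp (hA.trans hB)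

end FreeActionOnSphere

section HairyBall

open Complex ComplexConjugate

lemma exists_continuousMap_exp_eq {X : Type*} [TopologicalSpace X] [SimplyConnectedSpace X]
    [LocallyPathConnectedSpace X] (f : C(X, ℂ)) (hf : ∀ x, f x ≠ 0) :
    ∃ L : C(X, ℂ), ∀ x, exp (L x) = f x := by
  obtain ⟨x₀⟩ : Nonempty X := inferInstance
  obtain ⟨L, ⟨-, hL⟩, -⟩ := isCoveringMap_exp.existsUnique_continuousMap_lifts
    (⟨fun x ↦ ⟨f x, hf x⟩, by fun_prop⟩ : C(X, {z : ℂ // z ≠ 0})) x₀ (log (f x₀))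
    (Subtype.ext (exp_log (hf x₀)))
  exact ⟨L, fun x ↦ congrArg Subtype.val (congrFun hL x)⟩

lemma ne_of_exp_eq_exp_mul_I {k : ℝ} (hk : k ≠ 0) {M : ℝ → ℂ} (hM : Continuous M)
    (hexp : ∀ θ : ℝ, exp (M θ) = exp (k * θ * I)) : M (2 * Real.pi) ≠ M 0 := by
  have hM0 : exp (M 0) = 1 := by
    rw [hexp 0, ofReal_zero, mul_zero, zero_mul, exp_zero]
  have hM_eq : M = fun θ : ℝ ↦ k * θ * I + M 0 :=
    isCoveringMap_exp.eq_of_comp_eq hM (by fun_prop) (funext fun θ ↦ Subtype.ext <| by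
      simp only [Function.comp_apply, exp_add, hM0, mul_one, hexp]) 0 (by simp)
  rw [hM_eq]
  simp [hk, Real.pi_ne_zero]

/-- The image of the tangent vector `(p, c)` at the point `(ξ, t)` of the sphere in `ℂ × ℝ` under
the differential of the stereographic projection `(ξ, t) ↦ ξ / (1 - t)`, scaled by `(1 - t) ^ 2`. -/
noncomputable def stereographicPushforward (ξ : ℂ) (t : ℝ) (p : ℂ) (c : ℝ) : ℂ :=
  (1 - t) * p + c * ξ

section Pushforward

variable {ξ p : ℂ} {t c : ℝ} (hξ : ξ * conj ξ = 1 - t ^ 2)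
  (hp : conj ξ * p + ξ * conj p = -2 * t * c)

include hξ hp

lemma stereographicPushforward_ne_zero (ht : t ≠ 1) (hpc : p = 0 → c ≠ 0) :
    stereographicPushforward ξ t p c ≠ 0 := by
  intro h
  have h' := congrArg conj h
  simp only [stereographicPushforward, map_add, map_mul, map_sub, map_one, map_zero,
    conj_ofReal] at h h'
  have ht' : (1 - t : ℂ) ≠ 0 := by
    exact_mod_cast sub_ne_zero.2 ht.symm
  have hc : (c : ℂ) = 0 := by
    refine (mul_eq_zero.1 (?_ : (2 * (1 - t) : ℂ) * c = 0)).resolve_left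
      (mul_ne_zero two_ne_zero ht')
    linear_combination conj ξ * h + ξ * h' - (1 - t : ℂ) * hp - 2 * c * hξ
  rw [hc, zero_mul, add_zero] at h
  exact hpc ((mul_eq_zero.1 h).resolve_left ht') (ofReal_eq_zero.1 hc)

lemma stereographicPushforward_conj_mul_sq :
    stereographicPushforward (conj ξ) (-t) (conj p) (-c) * ξ ^ 2 =
      -(1 + t) ^ 2 * stereographicPushforward ξ t p c := by
  simp only [stereographicPushforward, ofReal_neg]
  linear_combination (1 + t : ℂ) * ξ * hp - ((1 + t) * p + c * ξ : ℂ) * hξ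

end Pushforward

/-- The first two coordinates of a vector of `ℝ³`, as a complex number. -/
noncomputable def horizontal (x : EuclideanSpace ℝ (Fin 3)) : ℂ := x 0 + x 1 * I

lemma continuous_horizontal : Continuous horizontal := by
  unfold horizontal
  fun_prop

lemma horizontal_add_inner (x v : EuclideanSpace ℝ (Fin 3)) :
    conj (horizontal x) * horizontal v + horizontal x * conj (horizontal v) =
      2 * (inner ℝ x v - x 2 * v 2 : ℝ) := by
  simp only [PiLp.inner_apply, Fin.sum_univ_three, horizontal, map_add, map_mul, conj_ofReal,
    conj_I, RCLike.inner_apply, conj_trivial]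
  push_cast
  linear_combination (-2 * x 1 * v 1 : ℂ) * I_sq

lemma eq_zero_of_horizontal_eq_zero {v : EuclideanSpace ℝ (Fin 3)} (h : horizontal v = 0)
    (h2 : v 2 = 0) : v = 0 := by
  simp only [horizontal, Complex.ext_iff] at h
  ext i
  fin_cases i
  all_goals simp_all

lemma horizontal_mul_conj (x : Sph 2) :
    horizontal x * conj (horizontal x) = 1 - ((x : EuclideanSpace ℝ (Fin 3)) 2 : ℂ) ^ 2 := by
  have h := horizontal_add_inner x x
  rw [real_inner_self_eq_norm_sq, norm_eq_of_mem_sphere] at h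
  push_cast at h
  linear_combination h / 2

/-- The north pole of the two-sphere. -/
noncomputable def northPole : Sph 2 := ⟨EuclideanSpace.single 2 1, by simp⟩

lemma inner_northPole (x : EuclideanSpace ℝ (Fin 3)) :
    inner ℝ (northPole : EuclideanSpace ℝ (Fin 3)) x = x 2 := by
  simp [northPole, EuclideanSpace.inner_single_left]

lemma apply_two_ne_one {x : Sph 2} (hx : x ≠ northPole) : (x : EuclideanSpace ℝ (Fin 3)) 2 ≠ 1 := by
  rw [← inner_northPole, Ne, inner_eq_one_iff_of_norm_eq_one (norm_eq_of_mem_sphere _)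
    (norm_eq_of_mem_sphere _)]
  exact fun h ↦ hx (Subtype.ext h.symm)

/-- The parametrization of the equator of the two-sphere by the angle. -/
noncomputable def equator (θ : ℝ) : Sph 2 :=
  ⟨!₂[Real.cos θ, Real.sin θ, 0], by
    rw [mem_sphere_zero_iff_norm, EuclideanSpace.norm_eq, Real.sqrt_eq_one]
    simp [Fin.sum_univ_three]⟩

lemma continuous_equator : Continuous equator := by
  refine ((PiLp.continuous_toLp 2 _).comp (continuous_pi fun i ↦ ?_)).subtype_mk _
  fin_cases i
  exacts [Real.continuous_cos, Real.continuous_sin, continuous_const]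

lemma equator_apply_two (θ : ℝ) : (equator θ : EuclideanSpace ℝ (Fin 3)) 2 = 0 := rfl

lemma equator_two_pi : equator (2 * Real.pi) = equator 0 := by
  simp [equator]

lemma horizontal_equator (θ : ℝ) : horizontal (equator θ) = exp (θ * I) := by
  rw [exp_mul_I, ← ofReal_cos, ← ofReal_sin]
  rfl

lemma exists_log_comp_equator {N : Sph 2} (hN : (N : EuclideanSpace ℝ (Fin 3)) 2 ≠ 0)
    (W : C(Sph 2, ℂ)) (hW : ∀ x ≠ N, W x ≠ 0) :
    ∃ M : ℝ → ℂ, Continuous M ∧ M (2 * Real.pi) = M 0 ∧ ∀ θ, exp (M θ) = W (equator θ) := by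
  obtain ⟨L, hL⟩ := exists_continuousMap_exp_eq (W.restrict {N}ᶜ) fun x ↦ hW x x.2
  have equator_ne (θ) : equator θ ≠ N := by
    rintro rfl
    exact hN (equator_apply_two θ)
  exact ⟨fun θ ↦ L ⟨equator θ, equator_ne θ⟩,
    L.continuous.comp (continuous_equator.subtype_mk equator_ne),
    by simp only [equator_two_pi], fun θ ↦ hL _⟩

theorem exists_eq_zero_of_inner_eq_zero (v : C(Sph 2, EuclideanSpace ℝ (Fin 3)))
    (hv : ∀ x : Sph 2, inner ℝ (x : EuclideanSpace ℝ (Fin 3)) (v x) = 0) : ∃ x, v x = 0 := by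
  by_contra! h0
  have hp (x : Sph 2) : conj (horizontal x) * horizontal (v x) +
      horizontal x * conj (horizontal (v x)) = -2 * (x.1 2 : ℝ) * (v x 2 : ℝ) := by
    rw [horizontal_add_inner, hv]
    push_cast
    ring
  have hpc (x : Sph 2) : horizontal (v x) = 0 → v x 2 ≠ 0 :=
    fun h h2 ↦ h0 x (eq_zero_of_horizontal_eq_zero h h2)
  have continuous_horizontal_v := continuous_horizontal.comp v.continuous
  have continuous_horizontal_coe := continuous_horizontal.comp
    (continuous_subtype_val : Continuous ((↑) : Sph 2 → EuclideanSpace ℝ (Fin 3)))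
  -- In the stereographic charts at the two poles `v` becomes a nonvanishing function, which has a
  -- logarithm on the punctured sphere. But the quotient of the two winds twice along the equator.
  let W : C(Sph 2, ℂ) := ⟨fun x ↦ stereographicPushforward (horizontal x) (x.1 2)
    (horizontal (v x)) (v x 2), by unfold stereographicPushforward; fun_prop⟩
  let W' : C(Sph 2, ℂ) := ⟨fun x ↦ stereographicPushforward (conj (horizontal x)) (-x.1 2)
    (conj (horizontal (v x))) (-v x 2), by unfold stereographicPushforward; fun_prop⟩
  obtain ⟨M, hM, hM2π, hMW⟩ := exists_log_comp_equator (N := northPole) (by simp [northPole]) W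
    fun x hx ↦ stereographicPushforward_ne_zero (horizontal_mul_conj x) (hp x)
      (apply_two_ne_one hx) (hpc x)
  obtain ⟨M', hM', hM'2π, hMW'⟩ := exists_log_comp_equator (N := -northPole)
    (by simp [northPole]) W' fun x hx ↦ stereographicPushforward_ne_zero
      (by simpa [mul_comm] using horizontal_mul_conj x)
      (by simpa [add_comm, mul_comm] using hp x)
      (apply_two_ne_one (x := -x) fun h ↦ hx (neg_eq_iff_eq_neg.1 h)) (by simpa using hpc x)
  refine ne_of_exp_eq_exp_mul_I (two_ne_zero (α := ℝ))
    (M := fun θ ↦ M θ - M' θ + Real.pi * I) (by fun_prop) (fun θ ↦ ?_) (by simp only [hM2π, hM'2π])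
  have hWW' : W' (equator θ) * exp (θ * I) ^ 2 = -W (equator θ) := by
    have h := stereographicPushforward_conj_mul_sq (horizontal_mul_conj (equator θ))
      (hp (equator θ))
    rw [horizontal_equator] at h
    simpa [W, W', equator_apply_two, horizontal_equator] using h
  rw [exp_add, exp_sub, exp_pi_mul_I, hMW, hMW', mul_neg_one, ← neg_div, ← hWW',
    mul_div_cancel_left₀ _ (hMW' θ ▸ exp_ne_zero _), ← exp_nat_mul]
  push_cast
  ring_nf

end HairyBall

section FixedPointFree

open EuclideanGeometry

lemma inner_inversion {V : Type*} [NormedAddCommGroup V] [InnerProductSpace ℝ V] {x y : V}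
    (hx : ‖x‖ = 1) (hy : ‖y‖ = 1) (hyx : y ≠ x) : inner ℝ x (inversion x 1 y) = 1 / 2 := by
  have norm_sub_ne_zero : ‖y - x‖ ≠ 0 := norm_ne_zero_iff.2 (sub_ne_zero.2 hyx)
  have inner_sub : inner ℝ x (y - x) = -(‖y - x‖ ^ 2 / 2) := by
    rw [inner_sub_right, real_inner_self_eq_norm_sq, norm_sub_sq_real, hx, hy, real_inner_comm]
    ring
  rw [inversion, vsub_eq_sub, vadd_eq_add, inner_add_right, inner_smul_right, inner_sub,
    real_inner_self_eq_norm_sq, hx, dist_eq_norm]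
  field_simp
  ring

lemma exists_eq_of_forall_ne_self (f g : C(Sph 2, Sph 2)) (hf : ∀ x, f x ≠ x)
    (hg : ∀ x, g x ≠ x) : ∃ x, f x = g x := by
  let w (f : C(Sph 2, Sph 2)) (x : Sph 2) : EuclideanSpace ℝ (Fin 3) := inversion x 1 (f x)
  have continuous_w {f : C(Sph 2, Sph 2)} (hf : ∀ x, f x ≠ x) : Continuous (w f) :=
    Continuous.inversion continuous_subtype_val continuous_const (by fun_prop)
      fun x ↦ Subtype.coe_ne_coe.2 (hf x)
  have inner_w {f : C(Sph 2, Sph 2)} (hf : ∀ x, f x ≠ x) (x : Sph 2) :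
      inner ℝ (x : EuclideanSpace ℝ (Fin 3)) (w f x) = 1 / 2 :=
    inner_inversion (norm_eq_of_mem_sphere _) (norm_eq_of_mem_sphere _)
      (Subtype.coe_ne_coe.2 (hf x))
  obtain ⟨x, hx⟩ := exists_eq_zero_of_inner_eq_zero
    ⟨fun x ↦ w f x - w g x, (continuous_w hf).sub (continuous_w hg)⟩ fun x ↦ by
      simp [inner_sub_right, inner_w hf, inner_w hg]
  exact ⟨x, Subtype.ext (inversion_injective _ one_ne_zero (sub_eq_zero.1 hx))⟩

lemma card_eq_two_of_isCancelSMul_sphere (G : Type*) [Group G] [Nontrivial G] [MulAction G (Sph 2)]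
    [ContinuousConstSMul G (Sph 2)] [IsCancelSMul G (Sph 2)] : Nat.card G = 2 := by
  obtain ⟨k, hk⟩ := exists_ne (1 : G)
  have eq_of_ne_one (g : G) (hg : g ≠ 1) : g = k := by
    obtain ⟨x, hx⟩ := exists_eq_of_forall_ne_self ⟨(g • ·), continuous_const_smul g⟩
      ⟨(k • ·), continuous_const_smul k⟩ (fun x h ↦ hg (IsCancelSMul.eq_one_of_smul h))
      (fun x h ↦ hk (IsCancelSMul.eq_one_of_smul h))
    exact IsCancelSMul.right_cancel g k x hx
  exact (Nat.card_eq_two_iff' (1 : G)).2 ⟨k, hk, eq_of_ne_one⟩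

end FixedPointFree

section Main

variable {m n : ℕ}

lemma pathConnectedSpace_sph (hn : n ≠ 0) : PathConnectedSpace (Sph n) := by
  refine isPathConnected_iff_pathConnectedSpace.1 (isPathConnected_sphere ?_ 0 zero_le_one)
  rw [← finrank_eq_rank, finrank_euclideanSpace_fin]
  exact_mod_cast Nat.lt_add_of_pos_left (Nat.pos_of_ne_zero hn)

variable {G : Type*} [Group G] [Finite G] [MulAction G (Sph n)] [ContinuousConstSMul G (Sph n)]
  [IsCancelSMul G (Sph n)]

lemma exists_lift_orbitMap (hm : 2 ≤ m) (f : C(Sph m, Quotient (MulAction.orbitRel G (Sph n)))) :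
    ∃ F : C(Sph m, Sph n), (orbitMap G (Sph n)).comp F = f :=
  exists_lift_sphere hm isCoveringMap_orbitMap Quotient.mk_surjective f

variable [Nontrivial G]

lemma exists_isFiberJoiningHomotopy_orbit (hm : 2 ≤ m) (hn : 2 ≤ n) (a : Sph n)
    (Φ : EuclideanSpace ℝ (Fin m) → Sph n) (hΦ : Continuous Φ) (hΦa : ∀ x, 2 ≤ ‖x‖ → Φ x = a) :
    ∃ H, IsFiberJoiningHomotopy H Φ (fun g : G ↦ g • a) 1 2 := by
  have hinj : Function.Injective fun g : G ↦ g • a := fun g k ↦ IsCancelSMul.right_cancel g k a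
  have hm' : 2 ≤ finrank ℝ (EuclideanSpace ℝ (Fin m)) := by rwa [finrank_euclideanSpace_fin]
  have hΦ1 (x) (hx : 2 ≤ ‖x‖) : Φ x = (1 : G) • a := (hΦa x hx).trans (one_smul G a).symm
  obtain rfl | hn := hn.eq_or_lt
  · exact exists_isFiberJoiningHomotopy_of_card_eq_two hinj hm' hΦ two_pos hΦ1
      (by rw [finrank_euclideanSpace_fin]) (card_eq_two_of_isCancelSMul_sphere G)
  · exact exists_isFiberJoiningHomotopy_of_four_le_finrank hinj hm' hΦ two_pos hΦ1
      (by rw [finrank_euclideanSpace_fin]; lia)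

lemma exists_homotopic_card_le (hm : 2 ≤ m) (hn : 2 ≤ n) (F₁ F₂ : C(Sph m, Sph n)) :
    ∃ F₁' F₂' : C(Sph m, Sph n), F₁.Homotopic F₁' ∧ F₂.Homotopic F₂' ∧
      ENat.card (ZerothHomotopy (OrbitCoincidence G F₁' F₂')) ≤ ENat.card G := by
  have := pathConnectedSpace_sph (n := n) (by lia)
  let a : Sph n := ⟨EuclideanSpace.single 0 1, by simp⟩
  let N : Sph m := ⟨EuclideanSpace.single 0 1, by simp⟩
  obtain ⟨F₁', F₂', hF₁, hF₂, hF₂a, hF₁₂, hN⟩ := exists_homotopic_pair_eq F₁ F₂ N a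
  obtain ⟨F₁'', hF₁', hpc⟩ := exists_homotopic_forall_isPrepathConnected (G := G) (by lia) hF₂a
    hF₁₂ hN (exists_isFiberJoiningHomotopy_orbit hm hn a)
  exact ⟨F₁'', F₂', hF₁.trans hF₁', hF₂, card_zerothHomotopy_le_card isCoveringMap_orbitMap hpc⟩

end Main

end Coincidence

open Coincidence in
theorem stmt11_general (m n : ℕ) (hm : 2 ≤ m) (hn : 2 ≤ n)
    (G : Type*) [Group G] [Finite G] [Nontrivial G] [MulAction G (Sph n)]
    [ContinuousConstSMul G (Sph n)] (hfree : ∀ (g : G) (x : Sph n), g • x = x → g = 1)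
    (f₁ f₂ : C(Sph m, Quotient (MulAction.orbitRel G (Sph n)))) (h : ¬ f₁.Homotopic f₂) :
    (∃ f₁' f₂' : C(Sph m, Quotient (MulAction.orbitRel G (Sph n))),
      f₁.Homotopic f₁' ∧ f₂.Homotopic f₂' ∧
      ENat.card (ZerothHomotopy {x : Sph m // f₁' x = f₂' x}) = (Nat.card G : ℕ∞)) ∧
    (∀ f₁' f₂' : C(Sph m, Quotient (MulAction.orbitRel G (Sph n))),
      f₁.Homotopic f₁' → f₂.Homotopic f₂' →
      (Nat.card G : ℕ∞) ≤ ENat.card (ZerothHomotopy {x : Sph m // f₁' x = f₂' x})) := by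
  have := isCancelSMul_iff_eq_one_of_smul_eq.2 hfree
  have card_le (f₁' f₂' : C(Sph m, Quotient (MulAction.orbitRel G (Sph n))))
      (h₁ : f₁.Homotopic f₁') (h₂ : f₂.Homotopic f₂') :
      (Nat.card G : ℕ∞) ≤ ENat.card (ZerothHomotopy {x : Sph m // f₁' x = f₂' x}) := by
    obtain ⟨F₁', rfl⟩ := exists_lift_orbitMap hm f₁'
    obtain ⟨F₂', rfl⟩ := exists_lift_orbitMap hm f₂'
    rw [← ENat.card_eq_coe_natCard]
    exact card_le_card_zerothHomotopy isCoveringMap_orbitMap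
      (exists_eq_smul_of_not_homotopic fun h' ↦ h ((h₁.trans h').trans h₂.symm))
  obtain ⟨F₁, rfl⟩ := exists_lift_orbitMap hm f₁
  obtain ⟨F₂, rfl⟩ := exists_lift_orbitMap hm f₂
  obtain ⟨F₁', F₂', hF₁, hF₂, hcard⟩ := exists_homotopic_card_le (G := G) hm hn F₁ F₂
  have h₁ := (ContinuousMap.Homotopic.refl (orbitMap G (Sph n))).comp hF₁
  have h₂ := (ContinuousMap.Homotopic.refl (orbitMap G (Sph n))).comp hF₂
  rw [ENat.card_eq_coe_natCard G] at hcard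
  exact ⟨⟨_, _, h₁, h₂, hcard.antisymm (card_le _ _ h₁ h₂)⟩, card_le⟩

theorem stmt11 (m n : ℕ) (hm : 2 ≤ m) (hn : 2 ≤ n)
    (G : Type) [Group G] [Finite G] [Nontrivial G] [MulAction G (Sph n)]
    -- the action is by diffeomorphisms:
    (hsmooth : ∀ g : G, ContMDiff (𝓡 n) (𝓡 n) (⊤ : ℕ∞) fun x : Sph n => g • x)
    -- the action is free:
    (hfree : ∀ (g : G) (x : Sph n), g • x = x → g = 1)
    (f₁ f₂ : C(Sph m, Quotient (MulAction.orbitRel G (Sph n))))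
    (h : ¬ f₁.Homotopic f₂) :
    (∃ f₁' f₂' : C(Sph m, Quotient (MulAction.orbitRel G (Sph n))),
      f₁.Homotopic f₁' ∧ f₂.Homotopic f₂' ∧
      ENat.card (ZerothHomotopy {x : Sph m // f₁' x = f₂' x}) = (Nat.card G : ℕ∞)) ∧
    (∀ f₁' f₂' : C(Sph m, Quotient (MulAction.orbitRel G (Sph n))),
      f₁.Homotopic f₁' → f₂.Homotopic f₂' →
      (Nat.card G : ℕ∞) ≤ ENat.card (ZerothHomotopy {x : Sph m // f₁' x = f₂' x})) := by
  have : ContinuousConstSMul G (Sph n) := ⟨fun g ↦ (hsmooth g).continuous⟩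
  exact stmt11_general m n hm hn G hfree f₁ f₂ h
end

section
/- Let X, Y be topological spaces and let f₁, f₁', f₂, f₂' : X → Y be continuous maps with f₁ homotopic to f₁' and f₂ homotopic to f₂'. Then there is a bijection between the set of path components of the homotopy coincidence space E(f₁,f₂) and the set of path components of E(f₁',f₂'). In particular the Reidemeister number #π₀(E(f₁,f₂)) depends only on the homotopy classes of f₁ and f₂. -/
/-- The homotopy coincidence space `E(f₁,f₂)`. -/
abbrev HCS {X Y : Type} [TopologicalSpace X] [TopologicalSpace Y]
    (f₁ f₂ : C(X, Y)) : Type :=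
  {p : X × C(unitInterval, Y) // p.2 0 = f₁ p.1 ∧ p.2 1 = f₂ p.1}

/-!
The homotopy coincidence space is a homotopy pullback: a map `Z → E(f₁, f₂)` is a map `g : Z → X`
together with a homotopy `f₁ ∘ g ≃ f₂ ∘ g`. Homotopies `H : f₁ ≃ f₁'` and `K : f₂ ≃ f₂'` therefore
induce a map `E(f₁, f₂) → E(f₁', f₂')` that replaces a path `θ` by `H⁻¹ · θ · K`. Following it by
the map induced by the reversed homotopies gives `H · (H⁻¹ · θ · K) · K⁻¹`, which runs along
`H⁻¹ · θ · K` from the starting point of `θ` to its end point, with backtracking. It is thus a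
reparametrization of that path, as `θ` is, so a straight-line homotopy of parameters joins the two,
continuously in `θ`. Hence the two spaces are homotopy equivalent, and in particular their path
components correspond.
-/

open Set
open scoped ContinuousMap unitInterval

section ZerothHomotopy

variable {A B : Type*} [TopologicalSpace A] [TopologicalSpace B]

/-- The map `π₀(f) : π₀(A) → π₀(B)` induced by a continuous map `f`. -/
def zerothHomotopyMap (f : C(A, B)) : ZerothHomotopy A → ZerothHomotopy B :=
  ZerothHomotopy.lift (fun a ↦ .mk (f a)) fun _ _ γ ↦ ZerothHomotopy.sound (γ.map f.continuous)

theorem zerothHomotopyMap_eq_of_homotopic {f g : C(A, B)} (h : f.Homotopic g) :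
    zerothHomotopyMap f = zerothHomotopyMap g := by
  obtain ⟨H⟩ := h
  funext c
  obtain ⟨a, rfl⟩ := ZerothHomotopy.mk_surjective c
  exact ZerothHomotopy.sound (H.evalAt a)

theorem leftInverse_zerothHomotopyMap {f : C(A, B)} {g : C(B, A)}
    (h : (g.comp f).Homotopic (.id A)) :
    Function.LeftInverse (zerothHomotopyMap g) (zerothHomotopyMap f) := by
  intro c
  have hc := congrFun (zerothHomotopyMap_eq_of_homotopic h) c
  obtain ⟨a, rfl⟩ := ZerothHomotopy.mk_surjective c
  exact hc

/-- The bijection on path components induced by a homotopy equivalence. -/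
def zerothHomotopyCongr (e : A ≃ₕ B) : ZerothHomotopy A ≃ ZerothHomotopy B where
  toFun := zerothHomotopyMap e.toFun
  invFun := zerothHomotopyMap e.invFun
  left_inv := leftInverse_zerothHomotopyMap e.left_inv
  right_inv := leftInverse_zerothHomotopyMap e.right_inv

end ZerothHomotopy

section Reparametrization

variable {T E : Type*} [TopologicalSpace T] [TopologicalSpace E] {S : Set T} {φ ψ : C(T, E)}

theorem homotopicRel_of_eqOn [AddCommGroup E] [IsTopologicalAddGroup E] [Module ℝ E]
    [ContinuousSMul ℝ E] (h : EqOn φ ψ S) : φ.HomotopicRel ψ S :=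
  ⟨{ ContinuousMap.Homotopy.affine φ ψ with prop' := fun t x hx ↦ by simp [h hx] }⟩

theorem homotopicRel_comp_prodMap_id {Z Y : Type*} [TopologicalSpace Z] [TopologicalSpace Y]
    (W : C(E × Z, Y)) (h : φ.HomotopicRel ψ S) :
    (W.comp (φ.prodMap (.id Z))).HomotopicRel (W.comp (ψ.prodMap (.id Z))) (S ×ˢ univ) := by
  obtain ⟨L⟩ := h
  refine ⟨⟨.comp (.refl W) (L.toHomotopy.prodMap (.refl (.id Z))), ?_⟩⟩
  rintro t ⟨x, z⟩ ⟨hx, -⟩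
  exact congrArg (fun u ↦ W (u, z)) (L.prop t x hx)

end Reparametrization

section Conjugation

variable {Z Y : Type*} [TopologicalSpace Z] [TopologicalSpace Y] {g₁ g₁' g₂ g₂' : C(Z, Y)}

/-- The concatenation `H⁻¹ · F · K` of homotopies parametrized by `ℝ`: the three pieces run over
`[-1, 0]`, `[0, 1]` and `[1, 2]`, so that `F` keeps its own parameter, and the map is constant in
the parameter outside `[-1, 2]`. -/
noncomputable def conjExtend (H : g₁.Homotopy g₁') (F : g₁.Homotopy g₂) (K : g₂.Homotopy g₂') :
    C(ℝ × Z, Y) where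
  toFun p := if p.1 ≤ 0 then H.extend (-p.1) p.2 else
    if p.1 ≤ 1 then F.extend p.1 p.2 else K.extend (p.1 - 1) p.2
  continuous_toFun := by
    refine Continuous.if_le (H.continuous.comp (by fun_prop)) ?_ continuous_fst continuous_const ?_
    · refine Continuous.if_le (F.continuous.comp (by fun_prop)) (K.continuous.comp (by fun_prop))
        continuous_fst continuous_const ?_
      intro p hp
      simp [hp]
    · intro p hp
      simp [hp]

variable (H : g₁.Homotopy g₁') (F : g₁.Homotopy g₂) (K : g₂.Homotopy g₂')

theorem conjExtend_of_nonpos {u : ℝ} (hu : u ≤ 0) (z : Z) :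
    conjExtend H F K (u, z) = H.extend (-u) z :=
  if_pos hu

theorem conjExtend_of_mem_Icc {u : ℝ} (hu : u ∈ Icc 0 1) (z : Z) :
    conjExtend H F K (u, z) = F.extend u z := by
  obtain rfl | h := hu.1.eq_or_lt
  · simp [conjExtend]
  · simp [conjExtend, h.not_ge, hu.2]

theorem conjExtend_of_one_le {u : ℝ} (hu : 1 ≤ u) (z : Z) :
    conjExtend H F K (u, z) = K.extend (u - 1) z := by
  obtain rfl | h := hu.eq_or_lt
  · simp [conjExtend]
  · simp [conjExtend, h.not_ge, (zero_lt_one.trans h).not_ge]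

/-- The concatenation `H⁻¹ · F · K` of homotopies, its three pieces taking a third of the unit
interval each. -/
noncomputable def conjHomotopy : g₁'.Homotopy g₂' where
  toFun p := conjExtend H F K (3 * p.1 - 1, p.2)
  map_zero_left z := by
    rw [conjExtend_of_nonpos _ _ _ (by norm_num)]
    norm_num
  map_one_left z := by
    rw [conjExtend_of_one_le _ _ _ (by norm_num)]
    norm_num

theorem conjHomotopy_extend_apply {t : ℝ} (ht : t ∈ Icc 0 1) (z : Z) :
    (conjHomotopy H F K).extend t z = conjExtend H F K (3 * t - 1, z) := by
  rw [ContinuousMap.Homotopy.extend_apply_of_mem_I _ ht]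
  rfl

theorem homotopy_symm_extend_apply (t : ℝ) (z : Z) : H.symm.extend t z = H.extend (1 - t) z :=
  (H.evalAt z).extend_symm_apply t

-- As `v` runs from `-1` to `2`, the parameter on the right descends from `0` to `-1`, climbs to `2`
-- and descends to `1`: this is `H`, then `H⁻¹ · F · K`, then `K⁻¹`.
theorem conjExtend_symm_conjHomotopy {v : ℝ} (hv : v ∈ Icc (-1) 2) (z : Z) :
    conjExtend H.symm (conjHomotopy H F K) K.symm (v, z) =
      conjExtend H F K (4 * max 0 (min 1 v) - v - 1, z) := by
  obtain ⟨hv₁, hv₂⟩ := hv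
  obtain h₀ | h₀ := le_total v 0
  · rw [conjExtend_of_nonpos _ _ _ h₀, homotopy_symm_extend_apply,
      min_eq_right (by linarith), max_eq_left h₀, conjExtend_of_nonpos _ _ _ (by linarith)]
    ring_nf
  obtain h₁ | h₁ := le_total v 1
  · rw [conjExtend_of_mem_Icc _ _ _ ⟨h₀, h₁⟩, conjHomotopy_extend_apply _ _ _ ⟨h₀, h₁⟩,
      min_eq_right h₁, max_eq_right h₀]
    ring_nf
  · rw [conjExtend_of_one_le _ _ _ h₁, homotopy_symm_extend_apply,
      min_eq_left h₁, max_eq_right zero_le_one, conjExtend_of_one_le _ _ _ (by linarith)]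
    ring_nf

theorem conjHomotopy_symm_conjHomotopy_homotopicRel :
    (conjHomotopy H.symm (conjHomotopy H F K) K.symm).toContinuousMap.HomotopicRel
      F.toContinuousMap ({0, 1} ×ˢ univ) := by
  let φ : C(I, ℝ) :=
    ⟨fun t ↦ 4 * max 0 (min 1 (3 * (t : ℝ) - 1)) - (3 * (t : ℝ) - 1) - 1, by fun_prop⟩
  let ι : C(I, ℝ) := ⟨Subtype.val, continuous_subtype_val⟩
  have hφι : EqOn φ ι {0, 1} := by
    rintro t (rfl | rfl) <;> norm_num [φ, ι]
  have h_left : (conjHomotopy H.symm (conjHomotopy H F K) K.symm).toContinuousMap =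
      (conjExtend H F K).comp (φ.prodMap (.id Z)) := by
    ext ⟨t, z⟩
    exact conjExtend_symm_conjHomotopy H F K
      ⟨by linarith [unitInterval.nonneg t], by linarith [unitInterval.le_one t]⟩ z
  have h_right : F.toContinuousMap = (conjExtend H F K).comp (ι.prodMap (.id Z)) := by
    ext ⟨t, z⟩
    exact ((conjExtend_of_mem_Icc H F K t.2 z).trans (F.extend_apply_coe t z)).symm
  rw [h_left, h_right]
  exact homotopicRel_comp_prodMap_id _ (homotopicRel_of_eqOn hφι)

end Conjugation

namespace HCS

variable {X Y : Type} [TopologicalSpace X] [TopologicalSpace Y] {f₁ f₁' f₂ f₂' : C(X, Y)}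
  {Z : Type*} [TopologicalSpace Z]

/-- The projection `E(f₁, f₂) → X`, `(x, θ) ↦ x`. -/
def proj : C(HCS f₁ f₂, X) := ⟨fun p ↦ p.1.1, by fun_prop⟩

/-- The tautological homotopy between the pullbacks of `f₁` and `f₂` to `E(f₁, f₂)`, which runs
along `θ` at the point `(x, θ)`. -/
def evalHomotopy : (f₁.comp proj).Homotopy (f₂.comp (proj : C(HCS f₁ f₂, X))) where
  toFun q := q.2.1.2 q.1
  map_zero_left p := p.2.1
  map_one_left p := p.2.2

/-- The map `Z → E(f₁, f₂)` with components `g` and the paths traced by a homotopy from `f₁ ∘ g` to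
`f₂ ∘ g`. -/
def lift (g : C(Z, X)) (F : (f₁.comp g).Homotopy (f₂.comp g)) : C(Z, HCS f₁ f₂) where
  toFun z := ⟨(g z, (F.evalAt z).toContinuousMap), (F.evalAt z).source, (F.evalAt z).target⟩
  continuous_toFun := by
    have h_path : Continuous fun z ↦ (F.evalAt z).toContinuousMap :=
      ContinuousMap.continuous_of_continuous_uncurry _ (F.continuous.comp continuous_swap)
    exact (g.continuous.prodMk h_path).subtype_mk _

theorem lift_homotopic_lift {g : C(Z, X)} {F G : (f₁.comp g).Homotopy (f₂.comp g)}
    (h : F.toContinuousMap.HomotopicRel G.toContinuousMap ({0, 1} ×ˢ univ)) :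
    (lift g F).Homotopic (lift g G) := by
  obtain ⟨L⟩ := h
  let sweep : (f₁.comp (g.comp .snd)).Homotopy (f₂.comp (g.comp (.snd : C(I × Z, Z)))) :=
    { toFun := fun q ↦ L (q.2.1, q.1, q.2.2)
      map_zero_left := fun q ↦ (L.eq_fst q.1 (by simp)).trans (F.apply_zero q.2)
      map_one_left := fun q ↦ (L.eq_fst q.1 (by simp)).trans (F.apply_one q.2) }
  refine ⟨⟨lift (g.comp .snd) sweep, fun z ↦ ?_, fun z ↦ ?_⟩⟩
  · exact Subtype.ext (Prod.ext rfl (ContinuousMap.ext fun t ↦ L.apply_zero (t, z)))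
  · exact Subtype.ext (Prod.ext rfl (ContinuousMap.ext fun t ↦ L.apply_one (t, z)))

/-- The map `E(f₁, f₂) → E(f₁', f₂')`, `(x, θ) ↦ (x, H(x)⁻¹ · θ · K(x))`. -/
noncomputable def transport (H : f₁.Homotopy f₁') (K : f₂.Homotopy f₂') :
    C(HCS f₁ f₂, HCS f₁' f₂') :=
  lift proj (conjHomotopy (H.compContinuousMap proj) evalHomotopy (K.compContinuousMap proj))

theorem transport_symm_comp_transport_homotopic (H : f₁.Homotopy f₁') (K : f₂.Homotopy f₂') :
    ((transport H.symm K.symm).comp (transport H K)).Homotopic (.id (HCS f₁ f₂)) :=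
  lift_homotopic_lift (conjHomotopy_symm_conjHomotopy_homotopicRel
    (H.compContinuousMap proj) evalHomotopy (K.compContinuousMap proj))

/-- The homotopy equivalence `E(f₁, f₂) ≃ₕ E(f₁', f₂')` given by conjugating paths with homotopies
`f₁ ≃ f₁'` and `f₂ ≃ f₂'`. -/
noncomputable def homotopyEquiv (H : f₁.Homotopy f₁') (K : f₂.Homotopy f₂') :
    HCS f₁ f₂ ≃ₕ HCS f₁' f₂' where
  toFun := transport H K
  invFun := transport H.symm K.symm
  left_inv := transport_symm_comp_transport_homotopic H K
  right_inv := by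
    simpa only [ContinuousMap.Homotopy.symm_symm] using
      transport_symm_comp_transport_homotopic H.symm K.symm

end HCS

theorem stmt12_general {X Y : Type} [TopologicalSpace X] [TopologicalSpace Y]
    {f₁ f₁' f₂ f₂' : C(X, Y)} (h₁ : f₁.Homotopic f₁') (h₂ : f₂.Homotopic f₂') :
    Nonempty (HCS f₁ f₂ ≃ₕ HCS f₁' f₂') := by
  obtain ⟨H⟩ := h₁
  obtain ⟨K⟩ := h₂
  exact ⟨HCS.homotopyEquiv H K⟩

theorem stmt12 (X Y : Type) [TopologicalSpace X] [TopologicalSpace Y]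
    (f₁ f₁' f₂ f₂' : C(X, Y))
    (h₁ : f₁.Homotopic f₁') (h₂ : f₂.Homotopic f₂') :
    Nonempty (ZerothHomotopy (HCS f₁ f₂) ≃ ZerothHomotopy (HCS f₁' f₂')) :=
  (stmt12_general h₁ h₂).map zerothHomotopyCongr
end

section
/- Let m ≥ n ≥ 1 and let A be an n×m integer matrix of rank n over ℚ, inducing the continuous surjective homomorphism f_A : Tᵐ → Tⁿ. Then the kernel of f_A (equivalently, the coincidence set C(f_A, 0) of f_A with the zero map) has finitely many connected components, and the number of its connected components equals the index [ℤⁿ : A(ℤᵐ)] of the image of the ℤ-linear map ℤᵐ → ℤⁿ given by A. -/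
/-- The `k`-torus `(ℝ/ℤ)ᵏ`. -/
abbrev Torus (k : ℕ) : Type := Fin k → AddCircle (1 : ℝ)

/-- The continuous homomorphism `Tᵐ → Tⁿ` induced by an `n × m` integer matrix. -/
noncomputable def torusHom {m n : ℕ} (A : Matrix (Fin n) (Fin m) ℤ) :
    C(Torus m, Torus n) :=
  ⟨fun x j => ∑ i, A j i • x i, by
    refine continuous_pi fun j => ?_
    exact continuous_finset_sum _ fun i _ => (continuous_apply i).zsmul (A j i)⟩

/-! Extend `A` to `A_ℝ : ℝᵐ → ℝⁿ` and apply the snake lemma to the rows `ℤᵏ → ℝᵏ → Tᵏ`, `k = m, n`: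
it yields a connecting homomorphism `δ` from `ker f_A` to `ℤⁿ / A ℤᵐ`. By exactness, `ker δ` is the
image of the vector space `ker A_ℝ`, hence connected. It is also open: an element of `ker f_A` near
`0` lifts to a small `v ∈ ℝᵐ`, and `A_ℝ v` is then a small element of `ℤⁿ`, hence zero. So the
components of `ker f_A` are the cosets of `ker δ`, and they correspond to the elements of `im δ`.
This image is finite because `ker f_A` is compact, so it consists of torsion elements; and it
contains all torsion elements, being the kernel of the map to `ℝⁿ / A_ℝ ℝᵐ`, which is torsion-free.
If `A` has rank `n`, then all of `ℤⁿ / A ℤᵐ` is torsion, since every `b ∈ ℤⁿ` is `A u` for some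
`u ∈ ℚᵐ`, whose denominators can be cleared. -/

section Torsion

variable {R : Type*} [CommRing R]

theorem isTorsion_quotient_range_mulVecLin (K : Type*) [Field K] [Algebra R K]
    [IsFractionRing R K] {ι κ : Type*} [Fintype ι] [Fintype κ] (A : Matrix κ ι R)
    (h : (A.map (algebraMap R K)).rank = Fintype.card κ) :
    Module.IsTorsion R ((κ → R) ⧸ LinearMap.range A.mulVecLin) := by
  rintro ⟨b⟩
  have hsurj : LinearMap.range (A.map (algebraMap R K)).mulVecLin = ⊤ :=
    Submodule.eq_top_of_finrank_eq (h.trans (Module.finrank_fintype_fun_eq_card K).symm)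
  obtain ⟨u, hu⟩ := LinearMap.range_eq_top.1 hsurj (algebraMap R K ∘ b)
  obtain ⟨c, hc⟩ := IsLocalization.exist_integer_multiples_of_finite (nonZeroDivisors R) u
  choose w hw using hc
  refine ⟨c, (Submodule.Quotient.mk_eq_zero _).2 ⟨w, funext fun j ↦ ?_⟩⟩
  apply IsFractionRing.injective R K
  calc algebraMap R K ((A.mulVec w) j)
      = (A.map (algebraMap R K)).mulVec ((c : R) • u) j := by
        rw [RingHom.map_mulVec]; congr 2; exact funext hw
    _ = algebraMap R K ((c : R) • b j) := by
        rw [Matrix.mulVec_smul, ← Matrix.mulVecLin_apply, hu]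
        simp [Algebra.smul_def]

variable {M N : Type*} [AddCommGroup M] [AddCommGroup N] [Module R M] [Module R N]

theorem torsion_le_ker [Module.IsTorsionFree R N] (f : M →ₗ[R] N) :
    Submodule.torsion R M ≤ LinearMap.ker f := by
  rintro x ⟨a, ha⟩
  have hfx : (a : R) • f x = 0 := by rw [← map_smul]; exact (congrArg f ha).trans (map_zero f)
  exact (isRegular_iff_mem_nonZeroDivisors.2 a.2).smul_eq_zero_iff_right.1 hfx

theorem le_torsion_of_finite (S : Submodule ℤ M) [Finite S] : S ≤ Submodule.torsion ℤ M := by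
  intro x hx
  have hS : Module.IsTorsion ℤ S := isAddTorsion_iff_isTorsion_int.1 isAddTorsion_of_finite
  obtain ⟨a, ha⟩ := @hS ⟨x, hx⟩
  exact ⟨a, congrArg Subtype.val ha⟩

theorem card_torsion_of_isTorsion (h : Module.IsTorsion R M) :
    Nat.card (Submodule.torsion R M) = Nat.card M :=
  Nat.card_congr (Equiv.subtypeUnivEquiv fun x ↦ @h x)

end Torsion

section ConnectedComponents

variable {G : Type*} [TopologicalSpace G] [Group G] [IsTopologicalGroup G] {N : Subgroup G}

@[to_additive]
theorem connectedComponent_one_eq_coe_of_isOpen (hopen : IsOpen (N : Set G))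
    (hconn : IsPreconnected (N : Set G)) : connectedComponent (1 : G) = N :=
  (IsClopen.connectedComponent_subset ⟨N.isClosed_of_isOpen hopen, hopen⟩ N.one_mem).antisymm
    (hconn.subset_connectedComponent N.one_mem)

@[to_additive]
theorem connectedComponent_eq_iff_inv_mul_mem (hopen : IsOpen (N : Set G))
    (hconn : IsPreconnected (N : Set G)) {x y : G} :
    connectedComponent x = connectedComponent y ↔ x⁻¹ * y ∈ N := by
  rw [eq_comm, connectedComponent_eq_iff_mem, ← mul_one x, ← smul_connectedComponent,
    connectedComponent_one_eq_coe_of_isOpen hopen hconn, Set.mem_smul_set_iff_inv_smul_mem,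
    mul_one, smul_eq_mul, SetLike.mem_coe]

/-- The components of a topological group, as the cosets of an open connected subgroup. -/
@[to_additive]
def connectedComponentsEquivQuotientSubgroup (hopen : IsOpen (N : Set G))
    (hconn : IsPreconnected (N : Set G)) : ConnectedComponents G ≃ G ⧸ N :=
  Quotient.congrRight fun _ _ ↦
    (connectedComponent_eq_iff_inv_mul_mem hopen hconn).trans QuotientGroup.leftRel_apply.symm

end ConnectedComponents

noncomputable section

/-- The inclusion `ℤᵏ → ℝᵏ`, as a `ℤ`-linear map: the first map of the rows of the snake diagram. -/
def latticeIncl (k : ℕ) : (Fin k → ℤ) →ₗ[ℤ] (Fin k → ℝ) :=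
  (Int.castAddHom ℝ).toIntLinearMap.compLeft (Fin k)

/-- The universal covering `ℝᵏ → Tᵏ`, as a `ℤ`-linear map: the second map of the rows of the
snake diagram. -/
def torusMk (k : ℕ) : (Fin k → ℝ) →ₗ[ℤ] Torus k :=
  (QuotientAddGroup.mk' (AddSubgroup.zmultiples (1 : ℝ))).toIntLinearMap.compLeft (Fin k)

theorem latticeIncl_injective (k : ℕ) : Function.Injective (latticeIncl k) :=
  Int.cast_injective.comp_left

theorem torusMk_surjective (k : ℕ) : Function.Surjective (torusMk k) :=
  QuotientAddGroup.mk_surjective.comp_left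

theorem exact_latticeIncl_torusMk (k : ℕ) : Function.Exact (latticeIncl k) (torusMk k) := by
  intro v
  have h (i : Fin k) : torusMk k v i = 0 ↔ ∃ b : ℤ, (b : ℝ) = v i :=
    AddCircle.coe_eq_zero_iff (1 : ℝ) |>.trans <| by simp only [zsmul_one]
  rw [funext_iff]
  exact (forall_congr' h).trans <| Classical.skolem.trans <| exists_congr fun b ↦ funext_iff.symm

theorem continuous_torusMk (k : ℕ) : Continuous (torusMk k) :=
  continuous_pi fun i ↦ (AddCircle.continuous_mk' 1).comp (continuous_apply i)

theorem isOpenMap_torusMk (k : ℕ) : IsOpenMap (torusMk k) :=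
  IsOpenMap.piMap (fun _ ↦ QuotientAddGroup.isOpenMap_coe)
    (Filter.Eventually.of_forall fun _ ↦ QuotientAddGroup.mk_surjective)

theorem eq_zero_of_norm_latticeIncl_lt_one {k : ℕ} {b : Fin k → ℤ} (h : ‖latticeIncl k b‖ < 1) :
    b = 0 := by
  ext i
  have hi : ‖(b i : ℝ)‖ < 1 := (pi_norm_lt_iff one_pos).1 h i
  rw [Real.norm_eq_abs] at hi
  exact Int.abs_lt_one_iff.1 (mod_cast hi)

variable {m n : ℕ} (A : Matrix (Fin n) (Fin m) ℤ)

/-- The homomorphism `torusHom A` as a `ℤ`-linear map, so that its kernel is a topological group. -/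
def torusHomLinear : Torus m →ₗ[ℤ] Torus n where
  toFun := torusHom A
  map_add' x y := by ext j; simp [torusHom, Finset.sum_add_distrib]
  map_smul' c x := by ext j; simp [torusHom, Finset.smul_sum, smul_comm c]

/-- The linear extension `A_ℝ : ℝᵐ → ℝⁿ` of `A`, a lift of `torusHom A` to the universal
coverings. -/
def realMulVecLin : (Fin m → ℝ) →ₗ[ℝ] (Fin n → ℝ) := (A.map (Int.cast : ℤ → ℝ)).mulVecLin

theorem latticeIncl_comp_mulVecLin :
    latticeIncl n ∘ₗ A.mulVecLin = (realMulVecLin A).restrictScalars ℤ ∘ₗ latticeIncl m :=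
  LinearMap.ext fun k ↦ funext fun j ↦ (Int.castRingHom ℝ).map_mulVec A k j

theorem torusMk_comp_realMulVecLin :
    torusMk n ∘ₗ (realMulVecLin A).restrictScalars ℤ = torusHomLinear A ∘ₗ torusMk m := by
  refine LinearMap.ext fun v ↦ funext fun j ↦ ?_
  let q := QuotientAddGroup.mk' (AddSubgroup.zmultiples (1 : ℝ))
  change q (∑ i, (A j i : ℝ) * v i) = ∑ i, A j i • q (v i)
  simp only [map_sum, ← zsmul_eq_mul, map_zsmul]

/-- The connecting homomorphism `δ : ker f_A → ℤⁿ / A ℤᵐ` of the snake lemma: a point of the kernel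
lifts to some `v ∈ ℝᵐ`, and its image is the class of `A v ∈ ℤⁿ`. -/
def connectingHom :
    LinearMap.ker (torusHomLinear A) →ₗ[ℤ] (Fin n → ℤ) ⧸ LinearMap.range A.mulVecLin :=
  SnakeLemma.δ' A.mulVecLin ((realMulVecLin A).restrictScalars ℤ) (torusHomLinear A)
    (latticeIncl m) (torusMk m) (exact_latticeIncl_torusMk m)
    (latticeIncl n) (torusMk n) (exact_latticeIncl_torusMk n)
    (latticeIncl_comp_mulVecLin A) (torusMk_comp_realMulVecLin A)
    (LinearMap.ker (torusHomLinear A)).subtype (LinearMap.exact_subtype_ker_map _)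
    (LinearMap.range A.mulVecLin).mkQ (LinearMap.exact_map_mkQ_range _)
    (torusMk_surjective m) (latticeIncl_injective n)

/-- The map `ker A_ℝ → ker f_A` induced by the covering `ℝᵐ → Tᵐ`; it precedes the connecting
homomorphism in the snake sequence. -/
def kerTorusMk : LinearMap.ker (realMulVecLin A) →ₗ[ℤ] LinearMap.ker (torusHomLinear A) :=
  (torusMk m).restrict (p := (LinearMap.ker (realMulVecLin A)).restrictScalars ℤ) fun v hv ↦ by
    have h := LinearMap.congr_fun (torusMk_comp_realMulVecLin A) v
    exact h.symm.trans ((congrArg (torusMk n) hv).trans (map_zero _))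

/-- The map `ℤⁿ / A ℤᵐ → ℝⁿ / A_ℝ ℝᵐ` induced by `ℤⁿ → ℝⁿ`; it follows the connecting
homomorphism in the snake sequence. -/
def cokernelLatticeIncl : ((Fin n → ℤ) ⧸ LinearMap.range A.mulVecLin) →ₗ[ℤ]
    ((Fin n → ℝ) ⧸ LinearMap.range (realMulVecLin A)) :=
  (LinearMap.range A.mulVecLin).mapQ ((LinearMap.range (realMulVecLin A)).restrictScalars ℤ)
    (latticeIncl n) <| by
    rintro _ ⟨k, rfl⟩
    exact ⟨latticeIncl m k, (LinearMap.congr_fun (latticeIncl_comp_mulVecLin A) k).symm⟩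

theorem exact_kerTorusMk_connectingHom :
    Function.Exact (kerTorusMk A) (connectingHom A) :=
  SnakeLemma.exact_δ'_right _ _ _ _ _ _ _ _ _ _ _
    ((LinearMap.ker (realMulVecLin A)).subtype.restrictScalars ℤ)
    (fun v ↦ (realMulVecLin A).exact_subtype_ker_map v) _ _ _ _ _ _
    (kerTorusMk A) rfl (Submodule.subtype_injective _)

theorem exact_connectingHom_cokernelLatticeIncl :
    Function.Exact (connectingHom A) (cokernelLatticeIncl A) :=
  SnakeLemma.exact_δ'_left _ ((realMulVecLin A).restrictScalars ℤ) _ _ _ _ _ _ _ _ _ _ _ _ _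
    ((LinearMap.range (realMulVecLin A)).mkQ.restrictScalars ℤ)
    (fun v ↦ (realMulVecLin A).exact_map_mkQ_range v) _ _
    (cokernelLatticeIncl A) rfl (Submodule.mkQ_surjective _)

theorem isPreconnected_ker_connectingHom :
    IsPreconnected (LinearMap.ker (connectingHom A) : Set (LinearMap.ker (torusHomLinear A))) := by
  rw [(exact_kerTorusMk_connectingHom A).linearMap_ker_eq, LinearMap.coe_range]
  exact isPreconnected_range
    (((continuous_torusMk m).comp continuous_subtype_val).subtype_mk _)

theorem isOpen_ker_connectingHom :
    IsOpen (LinearMap.ker (connectingHom A) : Set (LinearMap.ker (torusHomLinear A))) := by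
  have hcont : Continuous (realMulVecLin A) := LinearMap.continuous_of_finiteDimensional _
  have hU : IsOpen (torusMk m '' (realMulVecLin A ⁻¹' Metric.ball 0 1)) :=
    isOpenMap_torusMk m _ (Metric.isOpen_ball.preimage hcont)
  refine AddSubgroup.isOpen_of_mem_nhds (LinearMap.ker (connectingHom A)).toAddSubgroup (g := 0) <|
    Filter.mem_of_superset ((hU.preimage continuous_subtype_val).mem_nhds
      ⟨0, by simp, map_zero _⟩) ?_
  rintro x ⟨v, hv, hvx⟩
  obtain ⟨b, hb⟩ : realMulVecLin A v ∈ Set.range (latticeIncl n) := by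
    refine (exact_latticeIncl_torusMk n _).1 ?_
    exact (LinearMap.congr_fun (torusMk_comp_realMulVecLin A) v).trans
      ((congrArg (torusHomLinear A) hvx).trans x.2)
  have hb0 : b = 0 := eq_zero_of_norm_latticeIncl_lt_one (by simpa [hb] using hv)
  have hv0 : realMulVecLin A v = 0 := by rw [← hb, hb0, map_zero]
  exact (exact_kerTorusMk_connectingHom A x).2 ⟨⟨v, hv0⟩, Subtype.ext hvx⟩

instance : CompactSpace (LinearMap.ker (torusHomLinear A)) :=
  isCompact_iff_compactSpace.1
    (isClosed_eq (torusHom A).continuous continuous_const).isCompact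

theorem finite_range_connectingHom : Finite (LinearMap.range (connectingHom A)) :=
  have : Finite (LinearMap.ker (torusHomLinear A) ⧸ LinearMap.ker (connectingHom A)) :=
    AddSubgroup.quotient_finite_of_isOpen _ (isOpen_ker_connectingHom A)
  .of_equiv _ (connectingHom A).quotKerEquivRange.toEquiv

theorem range_connectingHom : LinearMap.range (connectingHom A) =
    Submodule.torsion ℤ ((Fin n → ℤ) ⧸ LinearMap.range A.mulVecLin) := by
  apply le_antisymm
  · have := finite_range_connectingHom A
    exact le_torsion_of_finite _
  · rw [← (exact_connectingHom_cokernelLatticeIncl A).linearMap_ker_eq]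
    have : Module.IsTorsionFree ℤ ((Fin n → ℝ) ⧸ LinearMap.range (realMulVecLin A)) :=
      .trans (R := ℝ)
    exact torsion_le_ker _

/-- The components of `ker f_A`, as the torsion elements of `ℤⁿ / A ℤᵐ`: a component corresponds to
the value of the connecting homomorphism on it. -/
def connectedComponentsKerEquivTorsion :
    ConnectedComponents (LinearMap.ker (torusHomLinear A)) ≃
      Submodule.torsion ℤ ((Fin n → ℤ) ⧸ LinearMap.range A.mulVecLin) :=
  (connectedComponentsEquivQuotientAddSubgroup (isOpen_ker_connectingHom A)
    (isPreconnected_ker_connectingHom A)).trans <|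
  (connectingHom A).quotKerEquivRange.toEquiv.trans <|
  Equiv.setCongr <| congrArg SetLike.coe (range_connectingHom A)

end

theorem stmt18_general {m n : ℕ} (A : Matrix (Fin n) (Fin m) ℤ) :
    Finite (ConnectedComponents {x : Torus m // torusHom A x = 0}) ∧
    Nat.card (ConnectedComponents {x : Torus m // torusHom A x = 0}) =
      Nat.card (Submodule.torsion ℤ ((Fin n → ℤ) ⧸ LinearMap.range A.mulVecLin)) := by
  have : Finite (Submodule.torsion ℤ ((Fin n → ℤ) ⧸ LinearMap.range A.mulVecLin)) :=
    range_connectingHom A ▸ finite_range_connectingHom A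
  exact ⟨.of_equiv _ (connectedComponentsKerEquivTorsion A).symm,
    Nat.card_congr (connectedComponentsKerEquivTorsion A)⟩

theorem stmt18 (m n : ℕ) (hnm : n ≤ m) (hn : 1 ≤ n)
    (A : Matrix (Fin n) (Fin m) ℤ)
    (hrank : (A.map (Int.cast : ℤ → ℚ)).rank = n) :
    Finite (ConnectedComponents {x : Torus m // torusHom A x = 0}) ∧
    Nat.card (ConnectedComponents {x : Torus m // torusHom A x = 0}) =
      Nat.card ((Fin n → ℤ) ⧸ LinearMap.range A.mulVecLin) := by
  rw [← card_torsion_of_isTorsion (isTorsion_quotient_range_mulVecLin ℚ A (by simpa using hrank))]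
  exact stmt18_general A
end
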